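/- arXiv:2403.19494 — 4 statements merged into one kernel-verified Lean document; each statement's English description precedes it below -/
import Mathlib

section
/- Let n_e ≥ 1 be an integer, let k ∈ {0,1,...,n_e}, let L be a real number and let c_1,...,c_{n_e} be real numbers. Then L·1_{k=0} + Σ_{j=1}^{n_e} c_j·1_{k=j} = (Σ_{j=1}^{n_e} c_j)·1_{k≠0} + Σ_{j=1}^{n_e} (L + Σ_{k'=1,k'≠j}^{n_e} c_{k'})·1_{k≠j} − (n_e−1)·(L + Σ_{j=1}^{n_e} c_j). (This is the alternative expression of the deferral loss L_def(h,r,x,y) of Lemma 3.1, with k the deferred index r̂(x), L = L(h(x),y) the regression loss value and c_j = c_j(x,y) the expert costs.) -/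
/-!
Extend the costs by `c 0 = L`. The deferred index then plays the same role for the predictor as for
the experts: with `T` the total cost, the charge attached to "`j` is not chosen" is `T - c j`.
Summing over all `j ≠ k` among the `n + 1` indices gives `n T - (T - c k) = c k + (n - 1) T`.
-/

open Finset

section

variable {ι : Type*} [DecidableEq ι] {s : Finset ι} {k : ι}

theorem sum_erase_sum_erase_add_sum {M : Type*} [AddCommMonoid M] (hk : k ∈ s) (f : ι → M) :
    ∑ j ∈ s.erase k, ∑ i ∈ s.erase j, f i + ∑ i ∈ s, f i
      = f k + #(s.erase k) • ∑ i ∈ s, f i := by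
  calc
    _ = ∑ j ∈ s.erase k, ∑ i ∈ s.erase j, f i + (∑ j ∈ s.erase k, f j + f k) := by
      rw [sum_erase_add s f hk]
    _ = f k + ∑ j ∈ s.erase k, (∑ i ∈ s.erase j, f i + f j) := by
      rw [sum_add_distrib, ← add_assoc, add_comm]
    _ = f k + ∑ _j ∈ s.erase k, ∑ i ∈ s, f i :=
      congrArg (f k + ·) <| sum_congr rfl fun _ hj ↦ sum_erase_add s f (mem_of_mem_erase hj)
    _ = f k + #(s.erase k) • ∑ i ∈ s, f i := by rw [sum_const]

theorem sum_mul_ite_ne {R : Type*} [NonAssocSemiring R] (s : Finset ι) (k : ι) (g : ι → R) :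
    ∑ j ∈ s, g j * (if k ≠ j then 1 else 0) = ∑ j ∈ s.erase k, g j := by
  simp_rw [mul_ite, mul_one, mul_zero]
  rw [← sum_filter, filter_ne]

variable {R : Type*} [NonAssocRing R]

theorem sum_mul_ite_eq_sum_sum_erase_mul_ite_ne_sub (hk : k ∈ s) (f : ι → R) :
    ∑ j ∈ s, f j * (if k = j then 1 else 0)
      = ∑ j ∈ s, (∑ i ∈ s.erase j, f i) * (if k ≠ j then 1 else 0)
        - ((#(s.erase k) : R) - 1) * ∑ i ∈ s, f i := by
  have sum_chosen : ∑ j ∈ s, f j * (if k = j then 1 else 0) = f k := by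
    simp_rw [mul_ite, mul_one, mul_zero]
    rw [sum_ite_eq, if_pos hk]
  have sum_unchosen := sum_erase_sum_erase_add_sum hk f
  rw [sum_chosen, sum_mul_ite_ne, sub_mul, one_mul, ← nsmul_eq_mul,
    eq_sub_of_add_eq sum_unchosen]
  abel

theorem deferral_loss_alt_expression_general {i₀ : ι} (hi₀ : i₀ ∉ s) (hk : k ∈ insert i₀ s)
    (L : R) (c : ι → R) :
    L * (if k = i₀ then 1 else 0) + ∑ j ∈ s, c j * (if k = j then 1 else 0)
      = (∑ j ∈ s, c j) * (if k ≠ i₀ then 1 else 0)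
        + ∑ j ∈ s, (L + ∑ i ∈ s.erase j, c i) * (if k ≠ j then 1 else 0)
        - ((#s : R) - 1) * (L + ∑ j ∈ s, c j) := by
  let f : ι → R := Function.update c i₀ L
  have f_i₀ : f i₀ = L := Function.update_self i₀ L c
  have f_of_mem {j : ι} (hj : j ∈ s) : f j = c j :=
    Function.update_of_ne (ne_of_mem_of_not_mem hj hi₀) L c
  have sum_chosen :
      ∑ j ∈ s, f j * (if k = j then 1 else 0) = ∑ j ∈ s, c j * (if k = j then 1 else 0) :=
    sum_congr rfl fun j hj ↦ by rw [f_of_mem hj]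
  have sum_f_erase {j : ι} (hj : j ∈ s) :
      ∑ i ∈ (insert i₀ s).erase j, f i = L + ∑ i ∈ s.erase j, c i := by
    rw [erase_insert_of_ne (ne_of_mem_of_not_mem hj hi₀).symm,
      sum_insert fun h ↦ hi₀ (mem_of_mem_erase h), f_i₀,
      sum_congr rfl fun _ hi ↦ f_of_mem (mem_of_mem_erase hi)]
  have sum_unchosen :
      ∑ j ∈ s, (∑ i ∈ (insert i₀ s).erase j, f i) * (if k ≠ j then 1 else 0)
        = ∑ j ∈ s, (L + ∑ i ∈ s.erase j, c i) * (if k ≠ j then 1 else 0) :=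
    sum_congr rfl fun j hj ↦ by rw [sum_f_erase hj]
  have card_erase_chosen : #((insert i₀ s).erase k) = #s := by
    rw [card_erase_of_mem hk, card_insert_of_notMem hi₀, Nat.add_sub_cancel]
  have symmetric_form := sum_mul_ite_eq_sum_sum_erase_mul_ite_ne_sub hk f
  rwa [card_erase_chosen, sum_insert hi₀, sum_insert hi₀, sum_insert hi₀, erase_insert hi₀, f_i₀,
    sum_chosen, sum_unchosen, sum_congr rfl fun _ ↦ f_of_mem] at symmetric_form

end

/-- Lemma 3.1, pointwise form: alternative expression of the deferral loss.
Here `k ∈ {0,1,...,nE}` is the deferred index, `L` the regression loss value and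
`c j` (for `j ∈ {1,...,nE}`) the expert costs. -/
theorem deferral_loss_alt_expression (nE : ℕ) (hnE : 1 ≤ nE) (k : ℕ) (hk : k ≤ nE)
    (L : ℝ) (c : ℕ → ℝ) :
    L * (if k = 0 then (1 : ℝ) else 0)
        + ∑ j ∈ Finset.Icc 1 nE, c j * (if k = j then (1 : ℝ) else 0)
      = (∑ j ∈ Finset.Icc 1 nE, c j) * (if k ≠ 0 then (1 : ℝ) else 0)
        + (∑ j ∈ Finset.Icc 1 nE,
            (L + ∑ k' ∈ (Finset.Icc 1 nE).erase j, c k') * (if k ≠ j then (1 : ℝ) else 0))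
        - ((nE : ℝ) - 1) * (L + ∑ j ∈ Finset.Icc 1 nE, c j) := by
  have hk_insert : k ∈ insert 0 (Icc 1 nE) := by simp only [mem_insert, mem_Icc]; omega
  simpa only [Nat.card_Icc, Nat.add_sub_cancel] using
    deferral_loss_alt_expression_general (by simp) hk_insert L c
end

section
/- (Case I of the proof of Theorem 3.1, conditional form.) Let L ∈ A and s ∈ S satisfy sel(s) = 0, and assume c̄_0 ≤ c̄_j for all j = 1,...,n_e. Then the conditional surrogate regret dominates the conditional deferral regret: C(L,s) − C* ≥ L − c̄_0 = D(L,s) − D*. -/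
open Finset

/-- Conditional deferral error `D(L,s)`. -/
noncomputable def Dcond (nE : ℕ) (cbar : Fin nE → ℝ)
    (sel : (Fin (nE + 1) → ℝ) → Fin (nE + 1)) (L : ℝ) (s : Fin (nE + 1) → ℝ) : ℝ :=
  (if sel s = 0 then L else 0) + ∑ j : Fin nE, if sel s = j.succ then cbar j else 0

/-- Best-in-class conditional deferral error `D* = min{c̄₀, c̄₁, ..., c̄_{n_e}}`, with
`c̄₀ = sInf A`. -/
noncomputable def Dstar (nE : ℕ) (cbar : Fin nE → ℝ) (A : Set ℝ) : ℝ :=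
  min (sInf A) (⨅ j, cbar j)

/-- Conditional surrogate error `C(L,s)`. -/
noncomputable def Ccond (nE : ℕ) (cbar : Fin nE → ℝ)
    (ℓ : (Fin (nE + 1) → ℝ) → Fin (nE + 1) → ℝ) (L : ℝ) (s : Fin (nE + 1) → ℝ) : ℝ :=
  (∑ j, cbar j) * ℓ s 0
    + ∑ j : Fin nE, (L + ∑ j' ∈ univ.erase j, cbar j') * ℓ s j.succ
    - ((nE : ℝ) - 1) * L

/-- Best-in-class conditional surrogate error `C*`. -/
noncomputable def Cstar (nE : ℕ) (cbar : Fin nE → ℝ)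
    (ℓ : (Fin (nE + 1) → ℝ) → Fin (nE + 1) → ℝ) (A : Set ℝ)
    (S : Set (Fin (nE + 1) → ℝ)) : ℝ :=
  sInf {u | ∃ L' ∈ A, ∃ s' ∈ S, u = Ccond nE cbar ℓ L' s'}

/-!
For fixed `s`, the conditional surrogate error is affine in `L`. Its slope is at least `1` when
`sel s = 0`, because each of the `n_e` terms `ℓ(s,j)`, `j ≥ 1`, is then at least `1`. Hence moving
`L` down towards `c̄₀` inside `A` lowers `C(·,s)` by at least as much, and `C*` lies below every
value reached. For a general `s` at most one of those terms can be small, so the slope is still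
nonnegative; as `C(0,s) ≥ 0`, the surrogate error is nonnegative and `C*` is a genuine infimum.
-/

theorem sub_csInf_le_sub_of_monotoneOn_sub_id {α : Type*} [ConditionallyCompleteLinearOrder α]
    [AddCommGroup α] [IsOrderedAddMonoid α] {f : α → α} {A : Set α} {a c : α}
    (hf : MonotoneOn (fun x ↦ f x - x) A) (ha : a ∈ A) (hc : ∀ x ∈ A, c ≤ f x) :
    a - sInf A ≤ f a - c := by
  rw [sub_le_comm]
  refine le_csInf ⟨a, ha⟩ fun x hx ↦ ?_
  rcases le_total a x with hax | hxa
  · exact (sub_le_self a (sub_nonneg.2 (hc a ha))).trans hax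
  · calc a - (f a - c) = c - (f a - a) := by abel
      _ ≤ f x - (f x - x) := sub_le_sub (hc x hx) (hf hx ha hxa)
      _ = x := sub_sub_cancel _ _

/-- The coefficient of `L` in the conditional surrogate error `C(L,s)`, as a function of the loss
vector `v = ℓ(s,·)`; see `Ccond_eq_add_mul`. -/
noncomputable def surrogateSlope {nE : ℕ} (v : Fin (nE + 1) → ℝ) : ℝ :=
  ∑ j : Fin nE, v j.succ - ((nE : ℝ) - 1)

section Slope

variable {nE : ℕ} {v : Fin (nE + 1) → ℝ}

theorem one_le_surrogateSlope (hv : ∀ j ≠ 0, 1 ≤ v j) : 1 ≤ surrogateSlope v := by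
  have card_le_sum : (nE : ℝ) ≤ ∑ j : Fin nE, v j.succ := by
    simpa using card_nsmul_le_sum univ (fun j : Fin nE ↦ v j.succ) 1
      fun j _ ↦ hv j.succ j.succ_ne_zero
  unfold surrogateSlope
  linarith

theorem surrogateSlope_nonneg {i : Fin (nE + 1)} (hi : 0 ≤ v i) (hv : ∀ j ≠ i, 1 ≤ v j) :
    0 ≤ surrogateSlope v := by
  cases i using Fin.cases with
  | zero => exact zero_le_one.trans (one_le_surrogateSlope hv)
  | succ i =>
    have card_le_sum_erase : (#(univ.erase i) : ℝ) ≤ ∑ j ∈ univ.erase i, v j.succ := by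
      simpa using card_nsmul_le_sum (univ.erase i) (fun j : Fin nE ↦ v j.succ) 1
        fun j hj ↦ hv j.succ ((Fin.succ_injective nE).ne (ne_of_mem_erase hj))
    have card_erase : (#(univ.erase i) : ℝ) = nE - 1 := by
      rw [cast_card_erase_of_mem (mem_univ i), card_univ, Fintype.card_fin]
    have sum_split := add_sum_erase univ (fun j : Fin nE ↦ v j.succ) (mem_univ i)
    unfold surrogateSlope
    linarith

end Slope

section ConditionalError

variable {nE : ℕ} {sel : (Fin (nE + 1) → ℝ) → Fin (nE + 1)}
  {ℓ : (Fin (nE + 1) → ℝ) → Fin (nE + 1) → ℝ} {cbar : Fin nE → ℝ} {A : Set ℝ}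
  {S : Set (Fin (nE + 1) → ℝ)} {L : ℝ} {s : Fin (nE + 1) → ℝ}

theorem Ccond_eq_add_mul (cbar : Fin nE → ℝ) (ℓ : (Fin (nE + 1) → ℝ) → Fin (nE + 1) → ℝ) (L : ℝ)
    (s : Fin (nE + 1) → ℝ) :
    Ccond nE cbar ℓ L s = Ccond nE cbar ℓ 0 s + L * surrogateSlope (ℓ s) := by
  simp only [Ccond, surrogateSlope, add_mul, sum_add_distrib, ← mul_sum]
  ring

theorem Ccond_zero_nonneg (hcbar : ∀ j, 0 ≤ cbar j) (hℓ : ∀ j, 0 ≤ ℓ s j) :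
    0 ≤ Ccond nE cbar ℓ 0 s := by
  simp only [Ccond, zero_add, mul_zero, sub_zero]
  exact add_nonneg (mul_nonneg (sum_nonneg fun j _ ↦ hcbar j) (hℓ 0))
    (sum_nonneg fun j _ ↦ mul_nonneg (sum_nonneg fun j' _ ↦ hcbar j') (hℓ j.succ))

theorem Ccond_nonneg {i : Fin (nE + 1)} (hcbar : ∀ j, 0 ≤ cbar j) (hℓ0 : ∀ j, 0 ≤ ℓ s j)
    (hℓ1 : ∀ j ≠ i, 1 ≤ ℓ s j) (hL : 0 ≤ L) : 0 ≤ Ccond nE cbar ℓ L s := by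
  rw [Ccond_eq_add_mul]
  exact add_nonneg (Ccond_zero_nonneg hcbar hℓ0)
    (mul_nonneg hL (surrogateSlope_nonneg (hℓ0 i) hℓ1))

theorem monotone_Ccond_sub_id (cbar : Fin nE → ℝ) (hℓ : ∀ j ≠ 0, 1 ≤ ℓ s j) :
    Monotone fun L ↦ Ccond nE cbar ℓ L s - L := by
  intro L L' hLL'
  have slope_gap : L * (surrogateSlope (ℓ s) - 1) ≤ L' * (surrogateSlope (ℓ s) - 1) :=
    mul_le_mul_of_nonneg_right hLL' (sub_nonneg.2 (one_le_surrogateSlope hℓ))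
  simp only [Ccond_eq_add_mul cbar ℓ L, Ccond_eq_add_mul cbar ℓ L']
  linarith

theorem Cstar_le_Ccond (hcbar : ∀ j, 0 ≤ cbar j) (hA : A ⊆ Set.Ici 0)
    (hℓ0 : ∀ s ∈ S, ∀ j, 0 ≤ ℓ s j) (hℓ1 : ∀ s ∈ S, ∀ j ≠ sel s, 1 ≤ ℓ s j)
    (hL : L ∈ A) (hs : s ∈ S) : Cstar nE cbar ℓ A S ≤ Ccond nE cbar ℓ L s := by
  refine csInf_le ⟨0, ?_⟩ ⟨L, hL, s, hs, rfl⟩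
  rintro _ ⟨L', hL', s', hs', rfl⟩
  exact Ccond_nonneg hcbar (hℓ0 s' hs') (hℓ1 s' hs') (hA hL')

theorem Dcond_of_sel_eq_zero (cbar : Fin nE → ℝ) (L : ℝ) (hs : sel s = 0) :
    Dcond nE cbar sel L s = L := by
  simp [Dcond, hs, (Fin.succ_ne_zero _).symm]

theorem Dstar_eq_sInf [NeZero nE] (hdom : ∀ j, sInf A ≤ cbar j) : Dstar nE cbar A = sInf A :=
  min_eq_left (le_ciInf hdom)

end ConditionalError

theorem caseI_surrogate_regret_dominates_general {nE : ℕ} (hnE : 1 ≤ nE)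
    {sel : (Fin (nE + 1) → ℝ) → Fin (nE + 1)} {S : Set (Fin (nE + 1) → ℝ)}
    {ℓ : (Fin (nE + 1) → ℝ) → Fin (nE + 1) → ℝ}
    (hℓ0 : ∀ s ∈ S, ∀ j, 0 ≤ ℓ s j) (hℓ1 : ∀ s ∈ S, ∀ j ≠ sel s, 1 ≤ ℓ s j)
    {A : Set ℝ} (hA : A ⊆ Set.Ici 0) {cbar : Fin nE → ℝ} (hcbar : ∀ j, 0 ≤ cbar j)
    {L : ℝ} (hL : L ∈ A) {s : Fin (nE + 1) → ℝ} (hs : s ∈ S) (hsel0 : sel s = 0) :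
    L - sInf A ≤ Ccond nE cbar ℓ L s - Cstar nE cbar ℓ A S ∧
      ((∀ j, sInf A ≤ cbar j) → L - sInf A = Dcond nE cbar sel L s - Dstar nE cbar A) := by
  constructor
  · have loss_ge_one : ∀ j ≠ 0, 1 ≤ ℓ s j := hsel0 ▸ hℓ1 s hs
    exact sub_csInf_le_sub_of_monotoneOn_sub_id
      ((monotone_Ccond_sub_id cbar loss_ge_one).monotoneOn A) hL
      fun _ hL' ↦ Cstar_le_Ccond hcbar hA hℓ0 hℓ1 hL' hs
  · intro hdom
    have : NeZero nE := NeZero.of_pos hnE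
    rw [Dcond_of_sel_eq_zero cbar L hsel0, Dstar_eq_sInf hdom]

/-- Case I of the proof of Theorem 3.1, conditional form. -/
theorem caseI_surrogate_regret_dominates (nE : ℕ) (hnE : 1 ≤ nE)
    (sel : (Fin (nE + 1) → ℝ) → Fin (nE + 1))
    (hsel : ∀ (s : Fin (nE + 1) → ℝ) (j : Fin (nE + 1)), s j ≤ s (sel s))
    (S : Set (Fin (nE + 1) → ℝ)) (hS : S.Nonempty)
    (ℓ : (Fin (nE + 1) → ℝ) → Fin (nE + 1) → ℝ)
    (hℓ0 : ∀ s j, 0 ≤ ℓ s j)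
    (hℓ1 : ∀ s j, j ≠ sel s → 1 ≤ ℓ s j)
    (lbar : ℝ) (hlbar : 0 < lbar)
    (C : Fin nE → ℝ) (hC : ∀ j, 0 < C j)
    (A : Set ℝ) (hA : A.Nonempty) (hAsub : A ⊆ Set.Icc 0 lbar)
    (cbar : Fin nE → ℝ) (hcbar : ∀ j, cbar j ∈ Set.Icc 0 (C j))
    (L : ℝ) (hL : L ∈ A) (s : Fin (nE + 1) → ℝ) (hs : s ∈ S)
    (hsel0 : sel s = 0)
    (hdom : ∀ j, sInf A ≤ cbar j) :
    L - sInf A ≤ Ccond nE cbar ℓ L s - Cstar nE cbar ℓ A S ∧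
      L - sInf A = Dcond nE cbar sel L s - Dstar nE cbar A := by
  have h := caseI_surrogate_regret_dominates_general hnE (fun s _ ↦ hℓ0 s) (fun s _ ↦ hℓ1 s)
    (fun _ hx ↦ (hAsub hx).1) (fun j ↦ (hcbar j).1) hL hs hsel0
  exact ⟨h.1, h.2 hdom⟩
end

section
/- (Theorem 4.1, conditional form, fixed predictor.) Assume S is regular and the pointwise Γ-consistency hypothesis holds with Γ(t) = β·t^α for some α ∈ (0,1] and β > 0. Fix L ∈ [0,l̄] (the conditional error of the fixed predictor h), and define D^h(s) = L·1_{sel(s)=0} + Σ_{j=1}^{n_e} c̄_j·1_{sel(s)=j}, D^h* = min{L, c̄_1, ..., c̄_{n_e}}, C^h(s) = (Σ_{j=1}^{n_e} c̄_j)·ℓ(s,0) + Σ_{j=1}^{n_e} (L + Σ_{j'≠j} c̄_{j'})·ℓ(s,j), and C^h* = inf_{s'∈S} C^h(s'). Then for every s ∈ S, D^h(s) − D^h* ≤ (n_e·(l̄ + Σ_{j=1}^{n_e} C_j))^{1−α}·β·(C^h(s) − C^h*)^α. -/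
/-!
Up to an additive constant, the deferral cost `c (sel s)` is a misclassification risk: give label
`j` the weight `∑ i, c i - c j`, the total cost of the other labels. The surrogate risk with these
weights is exactly `C^h`. Dividing the weights by their sum `W = n_e * ∑ i, c i` yields a
probability vector, to which `Γ`-consistency applies. Excess risks are homogeneous in the weights,
so undoing the normalization turns `β * t ^ α` into `W ^ (1 - α) * β * t ^ α`.
-/

open Finset

/-- Conditional deferral error `D^h(s)` for a fixed conditional predictor error `L`. -/
noncomputable def DcondH (nE : ℕ) (cbar : Fin nE → ℝ)
    (sel : (Fin (nE + 1) → ℝ) → Fin (nE + 1)) (L : ℝ) (s : Fin (nE + 1) → ℝ) : ℝ :=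
  (if sel s = 0 then L else 0) + ∑ j : Fin nE, if sel s = j.succ then cbar j else 0

/-- Conditional two-stage surrogate error `C^h(s)` for a fixed conditional predictor
error `L`. -/
noncomputable def CcondH (nE : ℕ) (cbar : Fin nE → ℝ)
    (ℓ : (Fin (nE + 1) → ℝ) → Fin (nE + 1) → ℝ) (L : ℝ) (s : Fin (nE + 1) → ℝ) : ℝ :=
  (∑ j, cbar j) * ℓ s 0
    + ∑ j : Fin nE, (L + ∑ j' ∈ univ.erase j, cbar j') * ℓ s j.succ

section Excess

variable {X : Type*}

/-- The excess `R x - inf R` of a risk `R` at `x`. A restricted class of predictors is modelled by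
letting `X` be a subtype. If `R` is not bounded below, the infimum has the junk value `0`. -/
noncomputable def excess (R : X → ℝ) (x : X) : ℝ :=
  R x - ⨅ y, R y

lemma excess_nonneg {R : X → ℝ} (hR : BddBelow (Set.range R)) (x : X) : 0 ≤ excess R x :=
  sub_nonneg.2 (ciInf_le hR x)

lemma excess_const (a : ℝ) (x : X) : excess (fun _ => a) x = 0 := by
  have : Nonempty X := ⟨x⟩
  rw [excess, ciInf_const, sub_self]

lemma excess_const_mul {a : ℝ} (ha : 0 ≤ a) (R : X → ℝ) (x : X) :
    excess (fun y => a * R y) x = a * excess R x := by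
  rw [excess, excess, mul_sub, Real.mul_iInf_of_nonneg ha]

lemma excess_const_add {R : X → ℝ} (hR : BddBelow (Set.range R)) (a : ℝ) (x : X) :
    excess (fun y => a + R y) x = excess R x := by
  have : Nonempty X := ⟨x⟩
  have hinf : a + ⨅ y, R y = ⨅ y, (a + R y) := (OrderIso.addLeft a).map_ciInf hR
  rw [excess, excess, ← hinf, add_sub_add_left_eq_sub]

lemma excess_comp_of_surjective {Y : Type*} {f : X → Y} (hf : f.Surjective) (R : Y → ℝ) (x : X) :
    excess (R ∘ f) x = excess R (f x) :=
  congrArg (R (f x) - ·) (hf.iInf_comp R)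

lemma sInf_setOf_exists_mem_eq_iInf (S : Set X) (R : X → ℝ) :
    sInf {v | ∃ s ∈ S, v = R s} = ⨅ s : S, R s := by
  simp only [← sInf_image', Set.image, eq_comm]

end Excess

section Consistency

variable {X ι : Type*} [Fintype ι]

/-- The conditional risk `∑ j, w j * φ x j` of a pointwise loss `φ`, for label weights `w` that need
not sum to one. -/
def condRisk (w : ι → ℝ) (φ : X → ι → ℝ) (x : X) : ℝ :=
  ∑ j, w j * φ x j

lemma condRisk_smul (a : ℝ) (w : ι → ℝ) (φ : X → ι → ℝ) :
    condRisk (a • w) φ = fun x => a * condRisk w φ x := by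
  ext x
  simp only [condRisk, Pi.smul_apply, smul_eq_mul, mul_sum, mul_assoc]

lemma bddBelow_range_condRisk {w : ι → ℝ} {φ : X → ι → ℝ} (hw : ∀ j, 0 ≤ w j)
    (hφ : ∀ x j, 0 ≤ φ x j) : BddBelow (Set.range (condRisk w φ)) :=
  ⟨0, Set.forall_mem_range.2 fun x => sum_nonneg fun j _ => mul_nonneg (hw j) (hφ x j)⟩

variable [DecidableEq ι]

/-- The misclassification loss of the classifier `pred`. -/
def zeroOneLoss (pred : X → ι) (x : X) (j : ι) : ℝ :=
  if pred x ≠ j then 1 else 0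

lemma condRisk_zeroOneLoss (w : ι → ℝ) (pred : X → ι) (x : X) :
    condRisk w (zeroOneLoss pred) x = ∑ j, w j - w (pred x) := by
  rw [← sum_erase_eq_sub (mem_univ (pred x)), ← filter_ne, sum_filter]
  simp only [condRisk, zeroOneLoss, mul_ite, mul_one, mul_zero]

/-- Pointwise `Γ`-consistency: for every label distribution, `Γ` of the excess surrogate risk bounds
the excess misclassification risk. -/
def IsConsistencyBound (Γ : ℝ → ℝ) (pred : X → ι) (ℓ : X → ι → ℝ) : Prop :=
  ∀ p ∈ stdSimplex ℝ ι, ∀ x,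
    excess (condRisk p (zeroOneLoss pred)) x ≤ Γ (excess (condRisk p ℓ) x)

namespace IsConsistencyBound

variable {pred : X → ι} {ℓ : X → ι → ℝ} {w : ι → ℝ}

lemma excess_le_sum_mul {Γ : ℝ → ℝ} (hΓ : IsConsistencyBound Γ pred ℓ) (hw : ∀ j, 0 ≤ w j)
    (hpos : 0 < ∑ j, w j) (x : X) :
    excess (condRisk w (zeroOneLoss pred)) x ≤
      (∑ j, w j) * Γ ((∑ j, w j)⁻¹ * excess (condRisk w ℓ) x) := by
  have hinv : 0 ≤ (∑ j, w j)⁻¹ := inv_nonneg.2 hpos.le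
  have hp : (∑ j, w j)⁻¹ • w ∈ stdSimplex ℝ ι := by
    refine ⟨fun j => mul_nonneg hinv (hw j), ?_⟩
    simp only [Pi.smul_apply, smul_eq_mul, ← mul_sum, inv_mul_cancel₀ hpos.ne']
  have h := hΓ _ hp x
  simp only [condRisk_smul, excess_const_mul hinv] at h
  exact (inv_mul_le_iff₀ hpos).1 h

lemma excess_le_rpow {α β : ℝ} (hβ : 0 ≤ β)
    (hΓ : IsConsistencyBound (fun t => β * t ^ α) pred ℓ) (hw : ∀ j, 0 ≤ w j)
    (hℓ : BddBelow (Set.range (condRisk w ℓ))) (x : X) :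
    excess (condRisk w (zeroOneLoss pred)) x ≤
      (∑ j, w j) ^ (1 - α) * β * excess (condRisk w ℓ) x ^ α := by
  have hE : 0 ≤ excess (condRisk w ℓ) x := excess_nonneg hℓ x
  have hW : 0 ≤ ∑ j, w j := sum_nonneg fun j _ => hw j
  rcases hW.eq_or_lt' with hzero | hpos
  · have hw0 : w = 0 := (Fintype.sum_eq_zero_iff_of_nonneg hw).1 hzero
    have hconst : condRisk w (zeroOneLoss pred) = fun _ => 0 := by
      ext y
      simp only [hw0, condRisk, Pi.zero_apply, zero_mul, sum_const_zero]
    rw [hconst, excess_const]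
    positivity
  · refine (hΓ.excess_le_sum_mul hw hpos x).trans_eq ?_
    rw [Real.mul_rpow (inv_nonneg.2 hW) hE, Real.inv_rpow hW, Real.rpow_sub hpos, Real.rpow_one]
    ring

end IsConsistencyBound

end Consistency

section DeferralCost

variable {X ι : Type*} [Fintype ι]

/-- The total cost of the labels other than `j`. These are the label weights for which the
misclassification risk is, up to a constant, the cost of the predicted label. -/
def complementaryCost (c : ι → ℝ) (j : ι) : ℝ :=
  ∑ i, c i - c j

lemma complementaryCost_nonneg {c : ι → ℝ} (hc : ∀ j, 0 ≤ c j) (j : ι) :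
    0 ≤ complementaryCost c j :=
  sub_nonneg.2 (single_le_sum (fun i _ => hc i) (mem_univ j))

lemma sum_complementaryCost (c : ι → ℝ) :
    ∑ j, complementaryCost c j = (Fintype.card ι - 1) * ∑ j, c j := by
  simp only [complementaryCost, sum_sub_distrib, sum_const, card_univ, nsmul_eq_mul, sub_one_mul]

variable [DecidableEq ι]

lemma excess_condRisk_complementaryCost_zeroOneLoss (c : ι → ℝ) (pred : X → ι) (x : X) :
    excess (condRisk (complementaryCost c) (zeroOneLoss pred)) x = excess (c ∘ pred) x := by
  have hbdd : BddBelow (Set.range (c ∘ pred)) :=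
    (Set.finite_range c).bddBelow.mono (Set.range_comp_subset_range pred c)
  have hrisk : condRisk (complementaryCost c) (zeroOneLoss pred) =
      fun y => (∑ j, complementaryCost c j - ∑ j, c j) + (c ∘ pred) y := by
    ext y
    rw [condRisk_zeroOneLoss, complementaryCost, Function.comp_apply, sub_sub_eq_add_sub,
      add_sub_right_comm]
  rw [hrisk, excess_const_add hbdd]

theorem two_stage_consistency_bound_conditional_general {pred : X → ι} {ℓ : X → ι → ℝ}
    (hℓ : ∀ x j, 0 ≤ ℓ x j) {c : ι → ℝ} (hc : ∀ j, 0 ≤ c j) {B : ℝ} (hB : ∑ j, c j ≤ B)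
    {α β : ℝ} (hα : α ≤ 1) (hβ : 0 ≤ β)
    (hcons : IsConsistencyBound (fun t => β * t ^ α) pred ℓ) (x : X) :
    excess (c ∘ pred) x ≤
      ((Fintype.card ι - 1) * B) ^ (1 - α) * β *
        excess (condRisk (complementaryCost c) ℓ) x ^ α := by
  have hw := complementaryCost_nonneg hc
  have hbdd := bddBelow_range_condRisk hw hℓ
  have hE := excess_nonneg hbdd x
  have hcard : (0 : ℝ) ≤ Fintype.card ι - 1 :=
    sub_nonneg.2 (Nat.one_le_cast.2 (Fintype.card_pos_iff.2 ⟨pred x⟩))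
  have hW : 0 ≤ (Fintype.card ι - 1) * ∑ j, c j := mul_nonneg hcard (sum_nonneg fun j _ => hc j)
  calc excess (c ∘ pred) x
      = excess (condRisk (complementaryCost c) (zeroOneLoss pred)) x :=
        (excess_condRisk_complementaryCost_zeroOneLoss c pred x).symm
    _ ≤ ((Fintype.card ι - 1) * ∑ j, c j) ^ (1 - α) * β *
          excess (condRisk (complementaryCost c) ℓ) x ^ α := by
        rw [← sum_complementaryCost]
        exact hcons.excess_le_rpow hβ hw hbdd x
    _ ≤ ((Fintype.card ι - 1) * B) ^ (1 - α) * β *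
          excess (condRisk (complementaryCost c) ℓ) x ^ α := by
        gcongr

end DeferralCost

section TwoStage

variable {nE : ℕ} (cbar : Fin nE → ℝ) (L : ℝ)

lemma iInf_cons_eq_min [Nonempty (Fin nE)] :
    ⨅ j, (Fin.cons L cbar : Fin (nE + 1) → ℝ) j = min L (⨅ j, cbar j) := by
  rw [iInf, Fin.range_cons, csInf_insert (Set.finite_range cbar).bddBelow (Set.range_nonempty cbar)]
  rfl

lemma DcondH_eq_cons (sel : (Fin (nE + 1) → ℝ) → Fin (nE + 1)) (s : Fin (nE + 1) → ℝ) :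
    DcondH nE cbar sel L s = (Fin.cons L cbar : Fin (nE + 1) → ℝ) (sel s) := by
  cases h : sel s using Fin.cases <;> simp [DcondH, h, (Fin.succ_ne_zero _).symm]

lemma DcondH_sub_min_eq_excess [Nonempty (Fin nE)] {S : Set (Fin (nE + 1) → ℝ)}
    {sel : (Fin (nE + 1) → ℝ) → Fin (nE + 1)} (hreg : ∀ j, ∃ s ∈ S, sel s = j) (x : S) :
    DcondH nE cbar sel L x - min L (⨅ j, cbar j) =
      excess ((Fin.cons L cbar : Fin (nE + 1) → ℝ) ∘ fun s : S => sel s) x := by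
  have hsurj : (fun s : S => sel s).Surjective := fun j =>
    let ⟨s, hs, hsel⟩ := hreg j
    ⟨⟨s, hs⟩, hsel⟩
  rw [excess_comp_of_surjective hsurj, excess, iInf_cons_eq_min, DcondH_eq_cons]

lemma CcondH_eq_condRisk (ℓ : (Fin (nE + 1) → ℝ) → Fin (nE + 1) → ℝ) :
    CcondH nE cbar ℓ L = condRisk (complementaryCost (Fin.cons L cbar)) ℓ := by
  ext s
  simp only [CcondH, condRisk, complementaryCost, Fin.sum_univ_succ, Fin.cons_zero, Fin.cons_succ,
    sum_erase_eq_sub (mem_univ _), add_sub_assoc, add_sub_cancel]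

end TwoStage

/-- Theorem 4.1, conditional form, fixed predictor. -/
theorem two_stage_consistency_bound_conditional (nE : ℕ) (hnE : 1 ≤ nE)
    (sel : (Fin (nE + 1) → ℝ) → Fin (nE + 1))
    (hsel : ∀ (s : Fin (nE + 1) → ℝ) (j : Fin (nE + 1)), s j ≤ s (sel s))
    (S : Set (Fin (nE + 1) → ℝ)) (hS : S.Nonempty)
    (hreg : ∀ j : Fin (nE + 1), ∃ s ∈ S, sel s = j)
    (ℓ : (Fin (nE + 1) → ℝ) → Fin (nE + 1) → ℝ)
    (hℓ0 : ∀ s j, 0 ≤ ℓ s j)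
    (hℓ1 : ∀ s j, j ≠ sel s → 1 ≤ ℓ s j)
    (lbar : ℝ) (hlbar : 0 < lbar)
    (C : Fin nE → ℝ) (hC : ∀ j, 0 < C j)
    (cbar : Fin nE → ℝ) (hcbar : ∀ j, cbar j ∈ Set.Icc 0 (C j))
    (α β : ℝ) (hα : α ∈ Set.Ioc (0 : ℝ) 1) (hβ : 0 < β)
    (hcons : ∀ p : Fin (nE + 1) → ℝ, (∀ j, 0 ≤ p j) → (∑ j, p j) = 1 → ∀ s ∈ S,
      (∑ j, p j * (if sel s ≠ j then (1 : ℝ) else 0))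
          - sInf {v | ∃ s' ∈ S, v = ∑ j, p j * (if sel s' ≠ j then (1 : ℝ) else 0)}
        ≤ β * ((∑ j, p j * ℓ s j)
          - sInf {v | ∃ s' ∈ S, v = ∑ j, p j * ℓ s' j}) ^ α)
    (L : ℝ) (hL : L ∈ Set.Icc 0 lbar)
    (s : Fin (nE + 1) → ℝ) (hs : s ∈ S) :
    DcondH nE cbar sel L s - min L (⨅ j, cbar j) ≤
      ((nE : ℝ) * (lbar + ∑ j, C j)) ^ (1 - α) * β
        * (CcondH nE cbar ℓ L s - sInf {v | ∃ s' ∈ S, v = CcondH nE cbar ℓ L s'}) ^ α := by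
  have : Nonempty (Fin nE) := ⟨⟨0, hnE⟩⟩
  have hcost_nonneg : ∀ j, 0 ≤ (Fin.cons L cbar : Fin (nE + 1) → ℝ) j :=
    Fin.cases hL.1 fun j => (hcbar j).1
  have hcost_sum : ∑ j, (Fin.cons L cbar : Fin (nE + 1) → ℝ) j ≤ lbar + ∑ j, C j := by
    rw [Fin.sum_cons]
    exact add_le_add hL.2 (sum_le_sum fun j _ => (hcbar j).2)
  have hcard : (Fintype.card (Fin (nE + 1)) : ℝ) - 1 = nE := by simp
  simp only [sInf_setOf_exists_mem_eq_iInf] at hcons ⊢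
  rw [DcondH_sub_min_eq_excess cbar L hreg ⟨s, hs⟩, CcondH_eq_condRisk, ← hcard]
  exact two_stage_consistency_bound_conditional_general (fun s : S => hℓ0 s) hcost_nonneg hcost_sum
    hα.2 hβ.le (fun p hp s => hcons p hp.1 hp.2 s s.2) ⟨s, hs⟩
end

section
/- (Corollary 3.2: excess error bound for the single-stage surrogate over all measurable functions.) Assume there exist α ∈ (0,1] and β > 0 such that for every probability measure ν on X×{0,...,n_e} and every measurable r : X → ℝ^{n_e+1}, E_{ℓ01}(r) − E*_{ℓ01} ≤ β·(E_ℓ(r) − E*_ℓ)^α. Then for every probability measure μ on X×ℝ, every measurable predictor h : X → ℝ and every measurable deferral function r : X → ℝ^{n_e+1}, E_{L_def}(h,r) − E*_{L_def} ≤ Γ̄(E_{L_ℓ}(h,r) − E*_{L_ℓ}), where Γ̄(t) = max{ t, (n_e·(l̄ + Σ_{j=1}^{n_e} C_j))^{1−α}·β·t^α }. -/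
open MeasureTheory Finset ENNReal

variable {X : Type*}

/-- The deferral loss `L_def(h,r,x,y)`. -/
noncomputable def defLoss (nE : ℕ) (L : ℝ → ℝ → ℝ) (c : Fin nE → X × ℝ → ℝ)
    (sel : (Fin (nE + 1) → ℝ) → Fin (nE + 1))
    (h : X → ℝ) (r : X → Fin (nE + 1) → ℝ) (z : X × ℝ) : ℝ :=
  (if sel (r z.1) = 0 then L (h z.1) z.2 else 0)
    + ∑ j : Fin nE, if sel (r z.1) = j.succ then c j z else 0

/-- The single-stage surrogate loss `L_ℓ(h,r,x,y)`. -/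
noncomputable def surLoss (nE : ℕ) (L : ℝ → ℝ → ℝ) (c : Fin nE → X × ℝ → ℝ)
    (ℓ : (Fin (nE + 1) → ℝ) → Fin (nE + 1) → ℝ)
    (h : X → ℝ) (r : X → Fin (nE + 1) → ℝ) (z : X × ℝ) : ℝ :=
  (∑ j, c j z) * ℓ (r z.1) 0
    + ∑ j : Fin nE, (L (h z.1) z.2 + ∑ j' ∈ univ.erase j, c j' z) * ℓ (r z.1) j.succ
    - ((nE : ℝ) - 1) * L (h z.1) z.2

/-- The two-stage surrogate loss `L^h_ℓ(r,x,y)` (no `−(n_e−1)L` term). -/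
noncomputable def surLossTS (nE : ℕ) (L : ℝ → ℝ → ℝ) (c : Fin nE → X × ℝ → ℝ)
    (ℓ : (Fin (nE + 1) → ℝ) → Fin (nE + 1) → ℝ)
    (h : X → ℝ) (r : X → Fin (nE + 1) → ℝ) (z : X × ℝ) : ℝ :=
  (∑ j, c j z) * ℓ (r z.1) 0
    + ∑ j : Fin nE, (L (h z.1) z.2 + ∑ j' ∈ univ.erase j, c j' z) * ℓ (r z.1) j.succ

/-- Generalization error of a nonnegative loss, as a Lebesgue integral in `[0,∞]`. -/
noncomputable def genErr {W : Type*} [MeasurableSpace W] (μ : Measure W) (f : W → ℝ) : ℝ≥0∞ :=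
  ∫⁻ w, ENNReal.ofReal (f w) ∂μ

variable [MeasurableSpace X]

/-- Multi-class zero-one generalization error `E_{ℓ01}(r)`. -/
noncomputable def E01 (nE : ℕ) (sel : (Fin (nE + 1) → ℝ) → Fin (nE + 1))
    (ν : Measure (X × Fin (nE + 1))) (r : X → Fin (nE + 1) → ℝ) : ℝ≥0∞ :=
  ν {z | sel (r z.1) ≠ z.2}

/-- Multi-class surrogate generalization error `E_ℓ(r)`. -/
noncomputable def Eell (nE : ℕ) (ℓ : (Fin (nE + 1) → ℝ) → Fin (nE + 1) → ℝ)
    (ν : Measure (X × Fin (nE + 1))) (r : X → Fin (nE + 1) → ℝ) : ℝ≥0∞ :=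
  ∫⁻ z, ENNReal.ofReal (ℓ (r z.1) z.2) ∂ν

/-!
Charging every outcome by the surrogate values of all the other labels makes the surrogate loss a
linear function of the vector of outcome costs, with nonnegative coefficients. Averaged costs, taken
conditionally on the first coordinate as Radon–Nikodym derivatives, therefore determine both
errors, and for a fixed predictor the two excess errors are those of a classification problem in
which label `k` has weight the sum of all the costs other than that of `k`. The assumed bound
applies to this problem after normalization, and the normalization produces the factor
`(n_e (l̄ + ∑ C_j)) ^ (1 - α)`.

The competitor may also have a better predictor. Where it predicts but `r` defers, the given
predictor can be exchanged for the better one without changing the loss of `r`. Where both predict,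
the gap between the two regression losses is itself turned into a cost vector, positive only at the
label of the predictor: not deferring is then the mistake, and the same classification bound
controls it. The costs of the better predictor there occur on both sides and cancel. So the second
term of the maximum is always enough.
-/

section SumOthers

variable {ι : Type*} [Fintype ι] [DecidableEq ι]

/-- `sumOthers f i` is the sum of the entries of `f` at all indices other than `i`: applied to a
vector of costs, it gives the weight of each outcome in the surrogate. -/
def sumOthers {M : Type*} [AddCommMonoid M] (f : ι → M) (i : ι) : M :=
  ∑ k ∈ univ.erase i, f k

theorem sumOthers_add_self {M : Type*} [AddCommMonoid M] (f : ι → M) (i : ι) :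
    sumOthers f i + f i = ∑ k, f k :=
  Finset.sum_erase_add univ f (Finset.mem_univ i)

theorem dotProduct_sumOthers {R : Type*} [CommSemiring R] (f g : ι → R) :
    f ⬝ᵥ sumOthers g = sumOthers f ⬝ᵥ g := by
  simp only [dotProduct, sumOthers, Finset.mul_sum, Finset.sum_mul]
  exact Finset.sum_comm' fun i k => by simp [ne_comm]

theorem sum_sumOthers {R : Type*} [CommSemiring R] (f : ι → R) :
    ∑ i, sumOthers f i = (Fintype.card ι - 1 : ℕ) * ∑ i, f i := by
  rw [← one_dotProduct, dotProduct_sumOthers, dotProduct, Finset.mul_sum]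
  simp [sumOthers]

theorem sumOthers_single_one (j i : ι) :
    sumOthers (Pi.single j 1 : ι → ℝ≥0∞) i = if j = i then 0 else 1 := by
  simp [sumOthers, Finset.sum_pi_single', Finset.mem_erase]

theorem sumOthers_sumOthers_single_one [Nontrivial ι] (j i : ι) :
    sumOthers (sumOthers (Pi.single j 1 : ι → ℝ≥0∞)) i
      = (Fintype.card ι - 2 : ℕ) + (Pi.single j 1 : ι → ℝ≥0∞) i := by
  set e : ι → ℝ≥0∞ := Pi.single j 1
  have he : ∑ k, e k = 1 := by simp [e]
  have hcard : Fintype.card ι - 1 = Fintype.card ι - 2 + 1 := by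
    have := Fintype.one_lt_card (α := ι)
    lia
  have hfin : sumOthers e i ≠ ∞ := by
    rw [sumOthers_single_one]
    split_ifs <;> simp
  refine (ENNReal.add_left_inj hfin).1 ?_
  calc sumOthers (sumOthers e) i + sumOthers e i = (Fintype.card ι - 1 : ℕ) := by
        rw [sumOthers_add_self, sum_sumOthers, he, mul_one]
    _ = (Fintype.card ι - 2 : ℕ) + (sumOthers e i + e i) := by
        rw [sumOthers_add_self, he, hcard, Nat.cast_add, Nat.cast_one]
    _ = (Fintype.card ι - 2 : ℕ) + e i + sumOthers e i := by ring

end SumOthers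

section Charges

variable {ι : Type*} [Fintype ι] [DecidableEq ι]

theorem sumOthers_single_one_dotProduct_sumOthers [Nontrivial ι] (j : ι) (v : ι → ℝ≥0∞) :
    sumOthers (Pi.single j 1) ⬝ᵥ sumOthers v = (Fintype.card ι - 2 : ℕ) * ∑ i, v i + v j := by
  rw [dotProduct_sumOthers, ← single_one_dotProduct j v]
  simp only [dotProduct, sumOthers_sumOthers_single_one, add_mul, Finset.sum_add_distrib,
    Finset.mul_sum]

/-- The amount that the single-stage surrogate, with pointwise surrogate values `l`, charges per
unit of cost of each outcome. The predictor `o` gets a rebate, which corresponds to the term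
`−(n_e − 1) L`; the truncated subtraction is a true one by `card_sub_two_le_sumOthers`. -/
noncomputable def singleStageCharge (o : ι) (l : ι → ℝ≥0∞) : ι → ℝ≥0∞ :=
  sumOthers l - Pi.single o ((Fintype.card ι - 2 : ℕ) : ℝ≥0∞)

theorem singleStageCharge_dotProduct_le (o : ι) (l v : ι → ℝ≥0∞) :
    singleStageCharge o l ⬝ᵥ v ≤ (∑ k, l k) * ∑ i, v i := by
  rw [Finset.mul_sum]
  exact Finset.sum_le_sum fun i _ => mul_le_mul_left
    (tsub_le_self.trans (Finset.sum_le_sum_of_subset (Finset.erase_subset _ _))) _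

theorem card_sub_two_le_sumOthers [Nontrivial ι] {l : ι → ℝ≥0∞} {j : ι}
    (hl : ∀ k, k ≠ j → 1 ≤ l k) (i : ι) : (Fintype.card ι - 2 : ℕ) ≤ sumOthers l i := by
  calc ((Fintype.card ι - 2 : ℕ) : ℝ≥0∞) ≤ sumOthers (sumOthers (Pi.single j 1)) i := by
        rw [sumOthers_sumOthers_single_one]
        exact le_self_add
    _ ≤ sumOthers l i := by
        refine Finset.sum_le_sum fun k _ => ?_
        rw [sumOthers_single_one]
        split_ifs with h
        exacts [zero_le, hl k (Ne.symm h)]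

theorem singleStageCharge_dotProduct_add [Nontrivial ι] (o : ι) {l : ι → ℝ≥0∞} {j : ι}
    (hl : ∀ k, k ≠ j → 1 ≤ l k) (v : ι → ℝ≥0∞) :
    singleStageCharge o l ⬝ᵥ v + (Fintype.card ι - 2 : ℕ) * v o = l ⬝ᵥ sumOthers v := by
  have hle : Pi.single o ((Fintype.card ι - 2 : ℕ) : ℝ≥0∞) ≤ sumOthers l :=
    update_le_iff.2 ⟨card_sub_two_le_sumOthers hl o, fun _ _ => zero_le⟩
  rw [← single_dotProduct, ← add_dotProduct, singleStageCharge, tsub_add_cancel_of_le hle,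
    dotProduct_sumOthers]

end Charges

section OfReal

variable {ι : Type*} [Fintype ι]

theorem ofReal_dotProduct {f g : ι → ℝ} (hf : ∀ i, 0 ≤ f i) (hg : ∀ i, 0 ≤ g i) :
    ENNReal.ofReal (f ⬝ᵥ g)
      = (fun i => ENNReal.ofReal (f i)) ⬝ᵥ fun i => ENNReal.ofReal (g i) := by
  simp only [dotProduct, ENNReal.ofReal_sum_of_nonneg fun i _ => mul_nonneg (hf i) (hg i),
    ENNReal.ofReal_mul (hf _)]

variable [DecidableEq ι]

theorem ofReal_dotProduct_sumOthers_sub [Nontrivial ι] (o : ι) {l v : ι → ℝ} {j : ι}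
    (hl0 : ∀ k, 0 ≤ l k) (hl1 : ∀ k, k ≠ j → 1 ≤ l k) (hv : ∀ i, 0 ≤ v i) :
    ENNReal.ofReal (l ⬝ᵥ sumOthers v - (Fintype.card ι - 2 : ℕ) * v o)
      = singleStageCharge o (fun k => ENNReal.ofReal (l k)) ⬝ᵥ fun i => ENNReal.ofReal (v i) := by
  have hsum : ∀ i, 0 ≤ sumOthers v i := fun i => Finset.sum_nonneg fun k _ => hv k
  have hsum_ofReal : (fun i => ENNReal.ofReal (sumOthers v i))
      = sumOthers fun i => ENNReal.ofReal (v i) :=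
    funext fun i => ENNReal.ofReal_sum_of_nonneg fun k _ => hv k
  have hrebate : ENNReal.ofReal ((Fintype.card ι - 2 : ℕ) * v o)
      = (Fintype.card ι - 2 : ℕ) * ENNReal.ofReal (v o) := by
    rw [ENNReal.ofReal_mul (Nat.cast_nonneg _), ENNReal.ofReal_natCast]
  rw [ENNReal.ofReal_sub _ (mul_nonneg (Nat.cast_nonneg _) (hv o)), ofReal_dotProduct hl0 hsum,
    hsum_ofReal, ← singleStageCharge_dotProduct_add o (j := j), ← hrebate,
    ENNReal.add_sub_cancel_right ENNReal.ofReal_ne_top]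
  exact fun k hk => ENNReal.one_le_ofReal.2 (hl1 k hk)

end OfReal

section Classification

variable {X S ι : Type*} [MeasurableSpace X] [MeasurableSpace S] [MeasurableSpace ι]
  {sel : S → ι} {ℓ : S → ι → ℝ≥0∞} {α : ℝ} {β : ℝ≥0∞}

/-- The excess error bound of the multi-class surrogate `ℓ` over all measurable score functions
`X → S`, where scores in `S` are turned into labels by `sel`. -/
def HasExcessErrorBound (X : Type*) [MeasurableSpace X] (sel : S → ι) (ℓ : S → ι → ℝ≥0∞)
    (α : ℝ) (β : ℝ≥0∞) : Prop :=
  ∀ ν : Measure (X × ι), IsProbabilityMeasure ν → ∀ r : X → S, Measurable r →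
    ν {z | sel (r z.1) ≠ z.2} - (⨅ (r' : X → S) (_ : Measurable r'), ν {z | sel (r' z.1) ≠ z.2})
      ≤ β * (∫⁻ z, ℓ (r z.1) z.2 ∂ν
          - ⨅ (r' : X → S) (_ : Measurable r'), ∫⁻ z, ℓ (r' z.1) z.2 ∂ν) ^ α

theorem mul_inv_mul_rpow {q : ℝ≥0∞} (hq0 : q ≠ 0) (hq : q ≠ ∞) (hα : 0 ≤ α) (t : ℝ≥0∞) :
    q * (q⁻¹ * t) ^ α = q ^ (1 - α) * t ^ α := by
  rw [ENNReal.mul_rpow_of_nonneg _ _ hα, ← mul_assoc, ENNReal.inv_rpow, ← ENNReal.rpow_neg,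
    sub_eq_add_neg, ENNReal.rpow_add _ _ hq0 hq, ENNReal.rpow_one]

theorem HasExcessErrorBound.measure_ne_le (hcons : HasExcessErrorBound X sel ℓ α β)
    (hα0 : 0 ≤ α) (hα1 : α ≤ 1) (ν : Measure (X × ι)) [IsFiniteMeasure ν] {B : ℝ≥0∞}
    (hB : ν Set.univ ≤ B) {r r' : X → S} (hr : Measurable r) (hr' : Measurable r') :
    ν {z | sel (r z.1) ≠ z.2} ≤ ν {z | sel (r' z.1) ≠ z.2}
      + β * (B ^ (1 - α) * (∫⁻ z, ℓ (r z.1) z.2 ∂ν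
          - ⨅ (ρ : X → S) (_ : Measurable ρ), ∫⁻ z, ℓ (ρ z.1) z.2 ∂ν) ^ α) := by
  rcases eq_zero_or_neZero ν with rfl | _
  · simp
  set q := ν Set.univ
  have hq0 : q ≠ 0 := NeZero.ne _
  have hq : q ≠ ∞ := measure_ne_top ν _
  have hbound := hcons (q⁻¹ • ν) inferInstance r hr
  simp only [Measure.smul_apply, lintegral_smul_measure, smul_eq_mul,
    ← ENNReal.mul_iInf_of_ne (ENNReal.inv_ne_zero.2 hq) (ENNReal.inv_ne_top.2 hq0),
    ← ENNReal.mul_sub fun _ _ => ENNReal.inv_ne_top.2 hq0] at hbound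
  set T := ∫⁻ z, ℓ (r z.1) z.2 ∂ν
      - ⨅ (ρ : X → S) (_ : Measurable ρ), ∫⁻ z, ℓ (ρ z.1) z.2 ∂ν
  rw [← tsub_le_iff_left]
  calc ν {z | sel (r z.1) ≠ z.2} - ν {z | sel (r' z.1) ≠ z.2}
      ≤ q * (q⁻¹ * (ν {z | sel (r z.1) ≠ z.2}
          - ⨅ (ρ : X → S) (_ : Measurable ρ), ν {z | sel (ρ z.1) ≠ z.2})) := by
        rw [← mul_assoc, ENNReal.mul_inv_cancel hq0 hq, one_mul]
        exact tsub_le_tsub_left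
          (iInf₂_le (f := fun (ρ : X → S) _ => ν {z | sel (ρ z.1) ≠ z.2}) r' hr') _
    _ ≤ q * (β * (q⁻¹ * T) ^ α) := by gcongr
    _ = β * (q ^ (1 - α) * T ^ α) := by
        rw [mul_left_comm, mul_inv_mul_rpow hq0 hq hα0]
    _ ≤ β * (B ^ (1 - α) * T ^ α) := by gcongr

variable [Fintype ι]

/-- The measure on labelled points in which the label `k` has density `w · k` with respect
to `P`. -/
noncomputable def labelMeasure (P : Measure X) (w : X → ι → ℝ≥0∞) : Measure (X × ι) :=
  ∑ k, (P.withDensity fun x => w x k).map fun x => (x, k)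

theorem lintegral_labelMeasure {P : Measure X} {w : X → ι → ℝ≥0∞} (hw : Measurable w)
    {g : X × ι → ℝ≥0∞} (hg : Measurable g) :
    ∫⁻ z, g z ∂labelMeasure P w = ∫⁻ x, w x ⬝ᵥ (fun k => g (x, k)) ∂P := by
  simp only [labelMeasure, dotProduct, lintegral_finsetSum_measure]
  rw [lintegral_finsetSum _ fun k _ => by fun_prop]
  refine Finset.sum_congr rfl fun k _ => ?_
  rw [lintegral_map hg measurable_prodMk_right,
    lintegral_withDensity_eq_lintegral_mul _ (by fun_prop) (by fun_prop)]
  rfl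

theorem labelMeasure_univ {P : Measure X} {w : X → ι → ℝ≥0∞} (hw : Measurable w) :
    labelMeasure P w Set.univ = ∫⁻ x, ∑ k, w x k ∂P := by
  rw [← lintegral_one, lintegral_labelMeasure hw measurable_const]
  simp [dotProduct]

theorem labelMeasure_ne [DecidableEq ι] [MeasurableSingletonClass ι] {P : Measure X}
    {w : X → ι → ℝ≥0∞} (hw : Measurable w) {g : X → ι} (hg : Measurable g) :
    labelMeasure P w {z | g z.1 ≠ z.2}
      = ∫⁻ x, w x ⬝ᵥ sumOthers (Pi.single (g x) 1) ∂P := by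
  have hne : MeasurableSet {z : X × ι | g z.1 ≠ z.2} :=
    (measurableSet_eq_fun (by fun_prop) (by fun_prop)).compl
  rw [← lintegral_indicator_one hne, lintegral_labelMeasure hw (by fun_prop)]
  refine lintegral_congr fun x => congrArg (w x ⬝ᵥ ·) (funext fun k => ?_)
  simp [sumOthers_single_one, Set.indicator]

end Classification

section Measurability

variable {X ι : Type*} [MeasurableSpace X]

theorem measurable_comp_label [Countable ι] [MeasurableSpace ι] [MeasurableSingletonClass ι]
    {f : X → ι → ℝ≥0∞} (hf : Measurable f) {g : X → ι} (hg : Measurable g) :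
    Measurable fun x => f x (g x) :=
  (measurable_from_prod_countable_left fun k => measurable_pi_iff.1 hf k :
    Measurable fun z : X × ι => f z.1 z.2).comp (measurable_id.prodMk hg)

variable [Fintype ι]

theorem measurable_dotProduct {f g : X → ι → ℝ≥0∞} (hf : Measurable f) (hg : Measurable g) :
    Measurable fun x => f x ⬝ᵥ g x := by
  unfold dotProduct
  fun_prop

theorem lintegral_dotProduct {μ : Measure X} {f g : X → ι → ℝ≥0∞} (hf : Measurable f)
    (hg : Measurable g) : ∫⁻ x, f x ⬝ᵥ g x ∂μ = ∑ i, ∫⁻ x, f x i * g x i ∂μ :=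
  lintegral_finsetSum _ fun i _ => by fun_prop

variable [DecidableEq ι]

theorem measurable_sumOthers {f : X → ι → ℝ≥0∞} (hf : Measurable f) :
    Measurable fun x => sumOthers (f x) := by
  unfold sumOthers
  fun_prop

theorem measurable_singleStageCharge (o : ι) {f : X → ι → ℝ≥0∞} (hf : Measurable f) :
    Measurable fun x => singleStageCharge o (f x) := by
  have := measurable_sumOthers hf
  unfold singleStageCharge
  fun_prop

theorem measurable_singleStageCharge_dotProduct (o : ι) {f v : X → ι → ℝ≥0∞}
    (hf : Measurable f) (hv : Measurable v) :
    Measurable fun x => singleStageCharge o (f x) ⬝ᵥ v x :=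
  measurable_dotProduct (measurable_singleStageCharge o hf) hv

end Measurability

section CostSensitive

variable {X S ι : Type*} [MeasurableSpace X] [MeasurableSpace S] [MeasurableSpace ι]
  [MeasurableSingletonClass ι] [Fintype ι] [DecidableEq ι] [Nontrivial ι]
  {sel : S → ι} {ℓ : S → ι → ℝ≥0∞} {α : ℝ} {β : ℝ≥0∞}

theorem labelMeasure_sumOthers_ne {P : Measure X} {w : X → ι → ℝ≥0∞} (hw : Measurable w)
    {g : X → ι} (hg : Measurable g) :
    labelMeasure P (fun x => sumOthers (w x)) {z | g z.1 ≠ z.2}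
      = (Fintype.card ι - 2 : ℕ) * ∫⁻ x, ∑ i, w x i ∂P + ∫⁻ x, w x (g x) ∂P := by
  rw [labelMeasure_ne (measurable_sumOthers hw) hg,
    ← lintegral_const_mul _ (by fun_prop), ← lintegral_add_right _ (measurable_comp_label hw hg)]
  refine lintegral_congr fun x => ?_
  rw [dotProduct_comm, sumOthers_single_one_dotProduct_sumOthers]

theorem lintegral_labelMeasure_sumOthers (o : ι) {P : Measure X} {w : X → ι → ℝ≥0∞}
    (hw : Measurable w) (hℓ : Measurable ℓ) (hℓ1 : ∀ s k, k ≠ sel s → 1 ≤ ℓ s k)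
    {r : X → S} (hr : Measurable r) :
    ∫⁻ z, ℓ (r z.1) z.2 ∂labelMeasure P (fun x => sumOthers (w x))
      = ∫⁻ x, singleStageCharge o (ℓ (r x)) ⬝ᵥ w x ∂P
        + (Fintype.card ι - 2 : ℕ) * ∫⁻ x, w x o ∂P := by
  have hℓr : Measurable fun x => ℓ (r x) := hℓ.comp hr
  rw [lintegral_labelMeasure (measurable_sumOthers hw)
      (g := fun z => ℓ (r z.1) z.2)
      (measurable_comp_label (hℓr.comp measurable_fst) measurable_snd),
    ← lintegral_const_mul _ (by fun_prop), ← lintegral_add_right _ (by fun_prop)]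
  refine lintegral_congr fun x => ?_
  rw [dotProduct_comm, singleStageCharge_dotProduct_add o (hℓ1 (r x))]

theorem HasExcessErrorBound.lintegral_cost_le (hcons : HasExcessErrorBound X sel ℓ α β)
    (hα0 : 0 ≤ α) (hα1 : α ≤ 1) (hsel : Measurable sel) (hℓ : Measurable ℓ)
    (hℓ1 : ∀ s k, k ≠ sel s → 1 ≤ ℓ s k) (o : ι) {P : Measure X} {w : X → ι → ℝ≥0∞}
    (hw : Measurable w) {B : ℝ≥0∞} (hB : (Fintype.card ι - 1 : ℕ) * ∫⁻ x, ∑ i, w x i ∂P ≤ B)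
    (hBtop : B ≠ ∞) {r r' : X → S} (hr : Measurable r) (hr' : Measurable r') :
    ∫⁻ x, w x (sel (r x)) ∂P ≤ ∫⁻ x, w x (sel (r' x)) ∂P
      + β * (B ^ (1 - α) * (∫⁻ x, singleStageCharge o (ℓ (r x)) ⬝ᵥ w x ∂P
          - ⨅ (ρ : X → S) (_ : Measurable ρ),
              ∫⁻ x, singleStageCharge o (ℓ (ρ x)) ⬝ᵥ w x ∂P) ^ α) := by
  set ν := labelMeasure P fun x => sumOthers (w x)
  have hmass : ν Set.univ ≤ B := by
    rw [labelMeasure_univ (measurable_sumOthers hw)]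
    simpa only [sum_sumOthers, lintegral_const_mul' _ _ (natCast_ne_top _)] using hB
  have : IsFiniteMeasure ν := ⟨hmass.trans_lt hBtop.lt_top⟩
  have htotal : ∫⁻ x, ∑ i, w x i ∂P ≠ ∞ := by
    refine ne_top_of_le_ne_top hBtop (le_trans (le_mul_of_one_le_left' ?_) hB)
    have := Fintype.one_lt_card (α := ι)
    exact_mod_cast (by lia : 1 ≤ Fintype.card ι - 1)
  have hpredictor : ∫⁻ x, w x o ∂P ≠ ∞ :=
    ne_top_of_le_ne_top htotal <| lintegral_mono fun x =>
      Finset.single_le_sum (fun _ _ => zero_le) (Finset.mem_univ o)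
  have hrisk : ∀ ρ : X → S, Measurable ρ → ∫⁻ z, ℓ (ρ z.1) z.2 ∂ν
      = ∫⁻ x, singleStageCharge o (ℓ (ρ x)) ⬝ᵥ w x ∂P
        + (Fintype.card ι - 2 : ℕ) * ∫⁻ x, w x o ∂P :=
    fun ρ hρ => lintegral_labelMeasure_sumOthers o hw hℓ hℓ1 hρ
  have herror : ∀ ρ : X → S, Measurable ρ → ν {z | sel (ρ z.1) ≠ z.2}
      = (Fintype.card ι - 2 : ℕ) * ∫⁻ x, ∑ i, w x i ∂P + ∫⁻ x, w x (sel (ρ x)) ∂P :=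
    fun ρ hρ => labelMeasure_sumOthers_ne hw (hsel.comp hρ)
  have hbound := hcons.measure_ne_le hα0 hα1 ν hmass hr hr'
  rw [herror r hr, herror r' hr', hrisk r hr, iInf_congr fun ρ => iInf_congr (hrisk ρ)] at hbound
  simp only [← ENNReal.iInf_add] at hbound
  rwa [add_assoc, ENNReal.add_le_add_iff_left (ENNReal.mul_ne_top (natCast_ne_top _) htotal),
    ENNReal.add_sub_add_eq_sub_right (ENNReal.mul_ne_top (natCast_ne_top _) hpredictor)] at hbound

end CostSensitive

section RegressionSwitch

variable {X ι : Type*} {o : ι}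

theorem le_of_eq_off {u u' : ι → ℝ≥0∞} (hu : ∀ k, k ≠ o → u' k = u k) (ho : u' o ≤ u o) :
    u' ≤ u := fun k => by
  rcases eq_or_ne k o with rfl | hk
  exacts [ho, (hu k hk).le]

theorem measurableSet_switch [MeasurableSpace X] [MeasurableSpace ι] [MeasurableSingletonClass ι]
    {a' : X → ι} {v v' : X → ι → ℝ≥0∞} (ha' : Measurable a') (hv : Measurable v)
    (hv' : Measurable v') : MeasurableSet {x | a' x = o ∧ v' x o < v x o} :=
  (ha' (measurableSet_singleton o)).inter <|
    measurableSet_lt (measurable_pi_iff.1 hv' o) (measurable_pi_iff.1 hv o)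

variable [DecidableEq ι] {j j' : ι} {u u' : ι → ℝ≥0∞}

/-- The costs left over from `u` once the regression gap has been dealt with. A competitor
predictor, with costs `u'`, replaces the given one where the competing label `j'` is the predictor
`o` and `u' o` improves on `u o`; where moreover the given label `j` is `o`, the improvement
`u - u'` becomes the whole cost vector, so that `o` is the only label with a positive cost. -/
noncomputable def residualCost (o j j' : ι) (u u' : ι → ℝ≥0∞) : ι → ℝ≥0∞ :=
  if j' = o ∧ u' o < u o then if j = o then u - u' else u' else u

/-- The part of the costs that `residualCost` sets aside: where both labels are `o` and the
competitor predictor improves, its costs `u'` are paid on either side of the comparison. -/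
noncomputable def sharedCost (o j j' : ι) (u u' : ι → ℝ≥0∞) : ι → ℝ≥0∞ :=
  if j' = o ∧ u' o < u o then if j = o then u' else 0 else 0

theorem residualCost_add_sharedCost_le (hu : ∀ k, k ≠ o → u' k = u k) :
    residualCost o j j' u u' + sharedCost o j j' u u' ≤ u := by
  unfold residualCost sharedCost
  split_ifs with hs hj
  · exact (tsub_add_cancel_of_le (le_of_eq_off hu hs.2.le)).le
  · simpa using le_of_eq_off hu hs.2.le
  · simp

theorem le_residualCost_add_sharedCost (hu : ∀ k, k ≠ o → u' k = u k) :
    u j ≤ residualCost o j j' u u' j + sharedCost o j j' u u' o := by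
  unfold residualCost sharedCost
  split_ifs with hs hj
  · exact hj ▸ le_tsub_add
  · simp [hu j hj]
  · simp

theorem residualCost_add_sharedCost_le_competitor (hu : ∀ k, k ≠ o → u' k = u k) {k : ι}
    (hk : if (j' = o ∧ u' o < u o) ∧ j = o then k ≠ o else k = j') :
    residualCost o j j' u u' k + sharedCost o j j' u u' o ≤ u' j' := by
  unfold residualCost sharedCost
  split_ifs with hs hj
  · rw [if_pos ⟨hs, hj⟩] at hk
    simp [hu k hk, hs.1]
  · rw [if_neg (by tauto)] at hk
    simp [hk]
  · rw [if_neg (by tauto)] at hk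
    rcases eq_or_ne j' o with rfl | hj'
    · simpa [hk] using hs
    · simp [hk, hu j' hj']

variable [MeasurableSpace X] [MeasurableSpace ι] [MeasurableSingletonClass ι] {a a' : X → ι}
  {v v' : X → ι → ℝ≥0∞}

theorem measurable_residualCost (ha : Measurable a) (ha' : Measurable a') (hv : Measurable v)
    (hv' : Measurable v') : Measurable fun x => residualCost o (a x) (a' x) (v x) (v' x) :=
  .ite (measurableSet_switch ha' hv hv')
    (.ite (ha (measurableSet_singleton o)) (by fun_prop) hv') hv

theorem measurable_sharedCost (ha : Measurable a) (ha' : Measurable a') (hv : Measurable v)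
    (hv' : Measurable v') : Measurable fun x => sharedCost o (a x) (a' x) (v x) (v' x) :=
  .ite (measurableSet_switch ha' hv hv')
    (.ite (ha (measurableSet_singleton o)) hv' measurable_const) measurable_const

end RegressionSwitch

section DeferralBound

theorem sub_iInf_le_sub {κ : Sort*} {F : κ → ℝ≥0∞} {e g k : ℝ≥0∞} (he : e ≠ ∞)
    (hlower : ∀ i, e ≤ F i + k) {i : κ} (hg : F i + k ≤ g) : F i - ⨅ j, F j ≤ g - e := by
  rcases eq_or_ne k ∞ with rfl | hk
  · simp_all
  have hinf : e ≤ (⨅ j, F j) + k := by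
    rw [ENNReal.iInf_add]
    exact le_iInf hlower
  calc F i - ⨅ j, F j = (F i + k) - ((⨅ j, F j) + k) := by
        rw [ENNReal.add_sub_add_eq_sub_right hk]
    _ ≤ g - e := tsub_le_tsub hg hinf

variable {X S ι : Type*} [MeasurableSpace X] [MeasurableSpace S] [MeasurableSpace ι]
  [MeasurableSingletonClass ι] [DecidableEq ι] {sel : S → ι} {o : ι} {P : Measure X}
  {v v' : X → ι → ℝ≥0∞}

theorem exists_lintegral_residualCost_add_sharedCost_le (hsel : Measurable sel)
    (ho : ∃ s, sel s ≠ o) (hv : Measurable v) (hv' : Measurable v')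
    (hvv' : ∀ x k, k ≠ o → v' x k = v x k) {r r' : X → S} (hr : Measurable r)
    (hr' : Measurable r') :
    ∃ ρ : X → S, Measurable ρ ∧
      ∫⁻ x, (residualCost o (sel (r x)) (sel (r' x)) (v x) (v' x) (sel (ρ x))
          + sharedCost o (sel (r x)) (sel (r' x)) (v x) (v' x) o) ∂P
        ≤ ∫⁻ x, v' x (sel (r' x)) ∂P := by
  obtain ⟨s, hs⟩ := ho
  have hboth : MeasurableSet {x | (sel (r' x) = o ∧ v' x o < v x o) ∧ sel (r x) = o} :=
    (measurableSet_switch (hsel.comp hr') hv hv').inter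
      (hsel.comp hr (measurableSet_singleton o))
  -- Where the residual cost is the regression gap, every label other than `o` is free.
  refine ⟨fun x => if (sel (r' x) = o ∧ v' x o < v x o) ∧ sel (r x) = o then s else r' x,
    .ite hboth measurable_const hr', ?_⟩
  refine lintegral_mono fun x => residualCost_add_sharedCost_le_competitor (hvv' x) ?_
  dsimp only
  split_ifs
  exacts [hs, rfl]

variable [Fintype ι] {ℓ : S → ι → ℝ≥0∞}

theorem le_lintegral_residualCost_add_sharedCost (hsel : Measurable sel) (hℓ : Measurable ℓ)
    (hv : Measurable v) (hv' : Measurable v') {e : ℝ≥0∞}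
    (hlower : ∀ (A : Set X) [DecidablePred (· ∈ A)], MeasurableSet A →
      ∀ ρ : X → S, Measurable ρ →
        e ≤ ∫⁻ x, singleStageCharge o (ℓ (ρ x)) ⬝ᵥ A.piecewise v' v x ∂P)
    {r r' ρ : X → S} (hr : Measurable r) (hr' : Measurable r') (hρ : Measurable ρ) :
    e ≤ ∫⁻ x, singleStageCharge o (ℓ (ρ x)) ⬝ᵥ
            residualCost o (sel (r x)) (sel (r' x)) (v x) (v' x) ∂P
      + ∫⁻ x, singleStageCharge o (ℓ (r x)) ⬝ᵥ
            sharedCost o (sel (r x)) (sel (r' x)) (v x) (v' x) ∂P := by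
  classical
  set A : Set X := {x | sel (r' x) = o ∧ v' x o < v x o}
  set D : Set X := {x | sel (r x) = o}
  have hA : MeasurableSet A := measurableSet_switch (hsel.comp hr') hv hv'
  have hD : MeasurableSet D := hsel.comp hr (measurableSet_singleton o)
  have hshared : Measurable fun x => sharedCost o (sel (r x)) (sel (r' x)) (v x) (v' x) :=
    measurable_sharedCost (hsel.comp hr) (hsel.comp hr') hv hv'
  have hℓr : Measurable fun x => ℓ (r x) := hℓ.comp hr
  -- On `A ∩ D` the shared cost is `v'`, already charged at `r`, so the residual term is dropped.
  refine (hlower A hA ((A ∩ D).piecewise r ρ) (hr.piecewise (hA.inter hD) hρ)).trans ?_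
  rw [← lintegral_add_right _ (measurable_singleStageCharge_dotProduct o hℓr hshared)]
  refine lintegral_mono fun x => ?_
  by_cases hA_mem : sel (r' x) = o ∧ v' x o < v x o <;> by_cases hD_mem : sel (r x) = o <;>
    simp [residualCost, sharedCost, Set.piecewise, A, D, hA_mem, hD_mem]

theorem lintegral_residualCost_sub_iInf_le (hsel : Measurable sel) (hℓ : Measurable ℓ)
    (hv : Measurable v) (hv' : Measurable v') (hvv' : ∀ x k, k ≠ o → v' x k = v x k)
    {e : ℝ≥0∞} (he : e ≠ ∞) (hlower : ∀ (A : Set X) [DecidablePred (· ∈ A)], MeasurableSet A →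
      ∀ ρ : X → S, Measurable ρ →
        e ≤ ∫⁻ x, singleStageCharge o (ℓ (ρ x)) ⬝ᵥ A.piecewise v' v x ∂P)
    {r r' : X → S} (hr : Measurable r) (hr' : Measurable r') :
    ∫⁻ x, singleStageCharge o (ℓ (r x)) ⬝ᵥ
          residualCost o (sel (r x)) (sel (r' x)) (v x) (v' x) ∂P
        - (⨅ (ρ : X → S) (_ : Measurable ρ), ∫⁻ x, singleStageCharge o (ℓ (ρ x)) ⬝ᵥ
            residualCost o (sel (r x)) (sel (r' x)) (v x) (v' x) ∂P)
      ≤ ∫⁻ x, singleStageCharge o (ℓ (r x)) ⬝ᵥ v x ∂P - e := by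
  have hℓr : Measurable fun x => ℓ (r x) := hℓ.comp hr
  have hshared : Measurable fun x => sharedCost o (sel (r x)) (sel (r' x)) (v x) (v' x) :=
    measurable_sharedCost (hsel.comp hr) (hsel.comp hr') hv hv'
  rw [iInf_subtype']
  refine sub_iInf_le_sub (i := (⟨r, hr⟩ : {ρ : X → S // Measurable ρ})) he (fun ρ =>
    le_lintegral_residualCost_add_sharedCost hsel hℓ hv hv' hlower hr hr' ρ.2) ?_
  rw [← lintegral_add_right _ (measurable_singleStageCharge_dotProduct o hℓr hshared)]
  refine lintegral_mono fun x => ?_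
  rw [← dotProduct_add]
  exact dotProduct_le_dotProduct_of_nonneg_left (residualCost_add_sharedCost_le (hvv' x)) zero_le

variable [Nontrivial ι] {α : ℝ} {β : ℝ≥0∞}

theorem HasExcessErrorBound.lintegral_deferral_le (hcons : HasExcessErrorBound X sel ℓ α β)
    (hα0 : 0 ≤ α) (hα1 : α ≤ 1) (hsel : Measurable sel) (hℓ : Measurable ℓ)
    (hℓ1 : ∀ s k, k ≠ sel s → 1 ≤ ℓ s k) (ho : ∃ s, sel s ≠ o)
    (hv : Measurable v) (hv' : Measurable v') (hvv' : ∀ x k, k ≠ o → v' x k = v x k)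
    {B : ℝ≥0∞} (hB : (Fintype.card ι - 1 : ℕ) * ∫⁻ x, ∑ i, v x i ∂P ≤ B) (hBtop : B ≠ ∞)
    {e : ℝ≥0∞} (he : e ≠ ∞)
    (hlower : ∀ (A : Set X) [DecidablePred (· ∈ A)], MeasurableSet A →
      ∀ ρ : X → S, Measurable ρ →
        e ≤ ∫⁻ x, singleStageCharge o (ℓ (ρ x)) ⬝ᵥ A.piecewise v' v x ∂P)
    {r r' : X → S} (hr : Measurable r) (hr' : Measurable r') :
    ∫⁻ x, v x (sel (r x)) ∂P ≤ ∫⁻ x, v' x (sel (r' x)) ∂P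
      + β * (B ^ (1 - α) * (∫⁻ x, singleStageCharge o (ℓ (r x)) ⬝ᵥ v x ∂P - e) ^ α) := by
  set w : X → ι → ℝ≥0∞ := fun x => residualCost o (sel (r x)) (sel (r' x)) (v x) (v' x)
  set k : X → ι → ℝ≥0∞ := fun x => sharedCost o (sel (r x)) (sel (r' x)) (v x) (v' x)
  have hw : Measurable w := measurable_residualCost (hsel.comp hr) (hsel.comp hr') hv hv'
  have hk : Measurable k := measurable_sharedCost (hsel.comp hr) (hsel.comp hr') hv hv'
  have hBw : (Fintype.card ι - 1 : ℕ) * ∫⁻ x, ∑ i, w x i ∂P ≤ B := by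
    refine le_trans ?_ hB
    gcongr with x i
    exact le_self_add.trans (residualCost_add_sharedCost_le (hvv' x) i)
  have hko : Measurable fun x => k x o := by fun_prop
  obtain ⟨ρ, hρ, hρ_le⟩ :=
    exists_lintegral_residualCost_add_sharedCost_le (P := P) hsel ho hv hv' hvv' hr hr'
  have hexcess : ∫⁻ x, singleStageCharge o (ℓ (r x)) ⬝ᵥ w x ∂P
        - (⨅ (ρ : X → S) (_ : Measurable ρ), ∫⁻ x, singleStageCharge o (ℓ (ρ x)) ⬝ᵥ w x ∂P)
      ≤ ∫⁻ x, singleStageCharge o (ℓ (r x)) ⬝ᵥ v x ∂P - e :=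
    lintegral_residualCost_sub_iInf_le hsel hℓ hv hv' hvv' he hlower hr hr'
  calc ∫⁻ x, v x (sel (r x)) ∂P
      ≤ ∫⁻ x, w x (sel (r x)) ∂P + ∫⁻ x, k x o ∂P := by
        rw [← lintegral_add_right _ hko]
        exact lintegral_mono fun x => le_residualCost_add_sharedCost (hvv' x)
    _ ≤ ∫⁻ x, w x (sel (ρ x)) ∂P + β * (B ^ (1 - α) *
          (∫⁻ x, singleStageCharge o (ℓ (r x)) ⬝ᵥ v x ∂P - e) ^ α) + ∫⁻ x, k x o ∂P := by
        grw [hcons.lintegral_cost_le hα0 hα1 hsel hℓ hℓ1 o hw hBw hBtop hr hρ, hexcess]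
    _ = ∫⁻ x, (w x (sel (ρ x)) + k x o) ∂P + β * (B ^ (1 - α) *
          (∫⁻ x, singleStageCharge o (ℓ (r x)) ⬝ᵥ v x ∂P - e) ^ α) := by
        rw [lintegral_add_right _ hko, add_right_comm]
    _ ≤ _ := by gcongr

end DeferralBound

section ConditionalCost

variable {X Y ι : Type*} [MeasurableSpace X] [MeasurableSpace Y] {μ : Measure (X × Y)}

/-- The conditional expectation of the cost vector `f` given the first coordinate, as a function
on `X`. Taking Radon–Nikodym derivatives of the first marginals avoids disintegrating `μ`, so `Y`
may be any measurable space. -/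
noncomputable def conditionalCost (μ : Measure (X × Y)) (f : X × Y → ι → ℝ≥0∞) (x : X) (i : ι) :
    ℝ≥0∞ :=
  (μ.withDensity fun z => f z i).fst.rnDeriv μ.fst x

theorem measurable_conditionalCost (f : X × Y → ι → ℝ≥0∞) :
    Measurable (conditionalCost μ f) :=
  measurable_pi_iff.2 fun _ => Measure.measurable_rnDeriv _ _

theorem conditionalCost_congr {f f' : X × Y → ι → ℝ≥0∞} {i : ι} (h : ∀ z, f z i = f' z i)
    (x : X) : conditionalCost μ f x i = conditionalCost μ f' x i := by
  simp only [conditionalCost, h]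

variable [IsFiniteMeasure μ] {f f' : X × Y → ι → ℝ≥0∞}

theorem lintegral_mul_conditionalCost (hf : Measurable f) (i : ι) {φ : X → ℝ≥0∞}
    (hφ : Measurable φ) :
    ∫⁻ z, φ z.1 * f z i ∂μ = ∫⁻ x, φ x * conditionalCost μ f x i ∂μ.fst := by
  have hac : (μ.withDensity fun z => f z i).fst ≪ μ.fst :=
    (withDensity_absolutelyContinuous μ _).map measurable_fst
  calc ∫⁻ z, φ z.1 * f z i ∂μ = ∫⁻ z, φ z.1 ∂μ.withDensity fun z => f z i := by
        rw [lintegral_withDensity_eq_lintegral_mul _ (by fun_prop) (by fun_prop)]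
        exact lintegral_congr fun z => mul_comm _ _
    _ = ∫⁻ x, φ x ∂(μ.withDensity fun z => f z i).fst := (lintegral_map hφ measurable_fst).symm
    _ = ∫⁻ x, φ x * conditionalCost μ f x i ∂μ.fst := by
        rw [← Measure.withDensity_rnDeriv_eq _ _ hac,
          lintegral_withDensity_eq_lintegral_mul _ (Measure.measurable_rnDeriv _ _) hφ]
        exact lintegral_congr fun x => mul_comm _ _

theorem lintegral_dotProduct_conditionalCost [Fintype ι] (hf : Measurable f)
    {φ : X → ι → ℝ≥0∞} (hφ : Measurable φ) :
    ∫⁻ z, φ z.1 ⬝ᵥ f z ∂μ = ∫⁻ x, φ x ⬝ᵥ conditionalCost μ f x ∂μ.fst := by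
  have hφ_fst : Measurable fun z : X × Y => φ z.1 := hφ.comp measurable_fst
  rw [lintegral_dotProduct hφ_fst hf,
    lintegral_dotProduct hφ (measurable_conditionalCost f)]
  exact Finset.sum_congr rfl fun i _ =>
    lintegral_mul_conditionalCost hf i (measurable_pi_iff.1 hφ i)

theorem lintegral_sum_conditionalCost [Fintype ι] (hf : Measurable f) :
    ∫⁻ z, ∑ i, f z i ∂μ = ∫⁻ x, ∑ i, conditionalCost μ f x i ∂μ.fst := by
  simpa only [one_dotProduct] using lintegral_dotProduct_conditionalCost hf (φ := fun _ => 1)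
    measurable_const

theorem lintegral_conditionalCost_label [Finite ι] [MeasurableSpace ι]
    [MeasurableSingletonClass ι] (hf : Measurable f) {a : X → ι} (ha : Measurable a) :
    ∫⁻ z, f z (a z.1) ∂μ = ∫⁻ x, conditionalCost μ f x (a x) ∂μ.fst := by
  classical
  cases nonempty_fintype ι
  have hsingle : Measurable fun x => (Pi.single (a x) 1 : ι → ℝ≥0∞) :=
    (measurable_of_countable fun j => (Pi.single j 1 : ι → ℝ≥0∞)).comp ha
  simpa only [single_one_dotProduct] using lintegral_dotProduct_conditionalCost hf hsingle

theorem lintegral_dotProduct_piecewise_conditionalCost [Fintype ι] (hf : Measurable f)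
    (hf' : Measurable f') {A : Set X} [DecidablePred (· ∈ A)] (hA : MeasurableSet A)
    {φ : X → ι → ℝ≥0∞} (hφ : Measurable φ) :
    ∫⁻ z, φ z.1 ⬝ᵥ (if z.1 ∈ A then f' z else f z) ∂μ
      = ∫⁻ x, φ x ⬝ᵥ A.piecewise (conditionalCost μ f') (conditionalCost μ f) x ∂μ.fst := by
  have hsplit : ∀ x (u' u : ι → ℝ≥0∞), φ x ⬝ᵥ (if x ∈ A then u' else u)
      = A.indicator φ x ⬝ᵥ u' + Aᶜ.indicator φ x ⬝ᵥ u := fun x u' u => by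
    by_cases hx : x ∈ A <;> simp [hx]
  have hφA := hφ.indicator hA
  have hφAc := hφ.indicator hA.compl
  have hφAc_f : Measurable fun z : X × Y => Aᶜ.indicator φ z.1 ⬝ᵥ f z :=
    measurable_dotProduct (hφAc.comp measurable_fst) hf
  simp only [Set.piecewise, hsplit]
  rw [lintegral_add_right _ hφAc_f, lintegral_dotProduct_conditionalCost hf' hφA,
    lintegral_dotProduct_conditionalCost hf hφAc,
    lintegral_add_right _ (measurable_dotProduct hφAc (measurable_conditionalCost f))]

end ConditionalCost

section JointBound

variable {X Y S ι : Type*} [MeasurableSpace X] [MeasurableSpace Y] [MeasurableSpace S]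
  [MeasurableSpace ι] [MeasurableSingletonClass ι] [Fintype ι] [DecidableEq ι] [Nontrivial ι]
  {sel : S → ι} {ℓ : S → ι → ℝ≥0∞} {α : ℝ} {β : ℝ≥0∞} {o : ι}

theorem HasExcessErrorBound.lintegral_joint_deferral_le (hcons : HasExcessErrorBound X sel ℓ α β)
    (hα0 : 0 ≤ α) (hα1 : α ≤ 1) (hsel : Measurable sel) (hℓ : Measurable ℓ)
    (hℓ1 : ∀ s k, k ≠ sel s → 1 ≤ ℓ s k) (ho : ∃ s, sel s ≠ o) {μ : Measure (X × Y)}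
    [IsFiniteMeasure μ] {f f' : X × Y → ι → ℝ≥0∞} (hf : Measurable f) (hf' : Measurable f')
    (hff' : ∀ k, k ≠ o → ∀ z, f' z k = f z k) {B : ℝ≥0∞}
    (hB : (Fintype.card ι - 1 : ℕ) * ∫⁻ z, ∑ i, f z i ∂μ ≤ B) (hBtop : B ≠ ∞) {e : ℝ≥0∞}
    (he : e ≠ ∞) (hlower : ∀ (A : Set X) [DecidablePred (· ∈ A)], MeasurableSet A →
      ∀ ρ : X → S, Measurable ρ →
        e ≤ ∫⁻ z, singleStageCharge o (ℓ (ρ z.1)) ⬝ᵥ (if z.1 ∈ A then f' z else f z) ∂μ)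
    {r r' : X → S} (hr : Measurable r) (hr' : Measurable r') :
    ∫⁻ z, f z (sel (r z.1)) ∂μ ≤ ∫⁻ z, f' z (sel (r' z.1)) ∂μ
      + β * (B ^ (1 - α) * (∫⁻ z, singleStageCharge o (ℓ (r z.1)) ⬝ᵥ f z ∂μ - e) ^ α) := by
  have hcharge : ∀ ρ : X → S, Measurable ρ → Measurable fun x => singleStageCharge o (ℓ (ρ x)) :=
    fun ρ hρ => measurable_singleStageCharge o (hℓ.comp hρ)
  rw [lintegral_conditionalCost_label hf (a := fun x => sel (r x)) (hsel.comp hr),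
    lintegral_conditionalCost_label hf' (a := fun x => sel (r' x)) (hsel.comp hr'),
    lintegral_dotProduct_conditionalCost hf (hcharge r hr)]
  refine hcons.lintegral_deferral_le hα0 hα1 hsel hℓ hℓ1 ho (measurable_conditionalCost f)
    (measurable_conditionalCost f') (fun x k hk => conditionalCost_congr (hff' k hk) x)
    (lintegral_sum_conditionalCost (μ := μ) hf ▸ hB) hBtop he (fun A _ hA ρ hρ => ?_) hr hr'
  rw [← lintegral_dotProduct_piecewise_conditionalCost hf hf' hA (hcharge ρ hρ)]
  exact hlower A hA ρ hρ

end JointBound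

section Losses

variable {X Y A S : Type*} {n : ℕ}

/-- The costs of the possible outcomes at the point `z`: the regression loss of `h` at index `0`,
then the costs of the experts. -/
def outcomeCosts (L : A → Y → ℝ) (c : Fin n → X × Y → ℝ) (h : X → A) (z : X × Y) :
    Fin (n + 1) → ℝ :=
  Fin.cons (L (h z.1) z.2) fun j => c j z

/-- The deferral loss, for predictions, labels and scores in arbitrary spaces. -/
def deferralLoss (L : A → Y → ℝ) (c : Fin n → X × Y → ℝ) (sel : S → Fin (n + 1)) (h : X → A)
    (r : X → S) (z : X × Y) : ℝ :=
  outcomeCosts L c h z (sel (r z.1))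

/-- The single-stage surrogate loss, for predictions, labels and scores in arbitrary spaces. -/
def singleStageLoss (L : A → Y → ℝ) (c : Fin n → X × Y → ℝ) (ℓ : S → Fin (n + 1) → ℝ)
    (h : X → A) (r : X → S) (z : X × Y) : ℝ :=
  ℓ (r z.1) ⬝ᵥ sumOthers (outcomeCosts L c h z) - ((n : ℝ) - 1) * L (h z.1) z.2

theorem defLoss_eq_deferralLoss (L : ℝ → ℝ → ℝ) (c : Fin n → X × ℝ → ℝ)
    (sel : (Fin (n + 1) → ℝ) → Fin (n + 1)) (h : X → ℝ) (r : X → Fin (n + 1) → ℝ) :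
    defLoss n L c sel h r = deferralLoss L c sel h r := by
  funext z
  unfold defLoss deferralLoss outcomeCosts
  cases sel (r z.1) using Fin.cases <;> simp [(Fin.succ_ne_zero _).symm]

theorem surLoss_eq_singleStageLoss (L : ℝ → ℝ → ℝ) (c : Fin n → X × ℝ → ℝ)
    (ℓ : (Fin (n + 1) → ℝ) → Fin (n + 1) → ℝ) (h : X → ℝ) (r : X → Fin (n + 1) → ℝ) :
    surLoss n L c ℓ h r = singleStageLoss L c ℓ h r := by
  funext z
  have hpredictor : sumOthers (outcomeCosts L c h z) 0 = ∑ j, c j z := by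
    rw [sumOthers, Finset.sum_erase_eq_sub (Finset.mem_univ 0), Fin.sum_univ_succ]
    simp [outcomeCosts]
  have hexpert : ∀ j : Fin n, sumOthers (outcomeCosts L c h z) j.succ
      = L (h z.1) z.2 + ∑ j' ∈ univ.erase j, c j' z := fun j => by
    rw [sumOthers, Finset.sum_erase_eq_sub (Finset.mem_univ _),
      Finset.sum_erase_eq_sub (Finset.mem_univ _), Fin.sum_univ_succ]
    simp [outcomeCosts, add_sub_assoc]
  rw [surLoss, singleStageLoss, dotProduct, Fin.sum_univ_succ, hpredictor]
  simp only [hexpert, mul_comm]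

theorem outcomeCosts_nonneg {L : A → Y → ℝ} {c : Fin n → X × Y → ℝ} (hL : ∀ a y, 0 ≤ L a y)
    (hc : ∀ j z, 0 ≤ c j z) (h : X → A) (z : X × Y) (i : Fin (n + 1)) :
    0 ≤ outcomeCosts L c h z i := by
  cases i using Fin.cases
  exacts [hL _ _, hc _ _]

theorem sum_ofReal_outcomeCosts_le {L : A → Y → ℝ} {c : Fin n → X × Y → ℝ}
    (hL : ∀ a y, 0 ≤ L a y) (hc : ∀ j z, 0 ≤ c j z) {M : ℝ}
    (hM : ∀ a x y, L a y + ∑ j, c j (x, y) ≤ M) (h : X → A) (z : X × Y) :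
    ∑ i, ENNReal.ofReal (outcomeCosts L c h z i) ≤ ENNReal.ofReal M := by
  rw [← ENNReal.ofReal_sum_of_nonneg fun i _ => outcomeCosts_nonneg hL hc h z i,
    Fin.sum_univ_succ]
  exact ENNReal.ofReal_le_ofReal (hM _ _ _)

theorem ofReal_singleStageLoss (hn : 1 ≤ n) {L : A → Y → ℝ} {c : Fin n → X × Y → ℝ}
    (hL : ∀ a y, 0 ≤ L a y) (hc : ∀ j z, 0 ≤ c j z) {sel : S → Fin (n + 1)}
    {ℓ : S → Fin (n + 1) → ℝ} (hℓ0 : ∀ s k, 0 ≤ ℓ s k) (hℓ1 : ∀ s k, k ≠ sel s → 1 ≤ ℓ s k)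
    (h : X → A) (r : X → S) (z : X × Y) :
    ENNReal.ofReal (singleStageLoss L c ℓ h r z)
      = singleStageCharge 0 (fun k => ENNReal.ofReal (ℓ (r z.1) k))
        ⬝ᵥ fun i => ENNReal.ofReal (outcomeCosts L c h z i) := by
  have : Nontrivial (Fin (n + 1)) := Fin.nontrivial_iff_two_le.2 (by lia)
  have hcard : ((Fintype.card (Fin (n + 1)) - 2 : ℕ) : ℝ) = n - 1 := by
    rw [Fintype.card_fin, Nat.add_sub_add_right n 1 1, Nat.cast_sub hn, Nat.cast_one]
  rw [← ofReal_dotProduct_sumOthers_sub 0 (hℓ0 _) (hℓ1 _) (outcomeCosts_nonneg hL hc h z), hcard]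
  rfl

theorem outcomeCosts_piecewise (L : A → Y → ℝ) (c : Fin n → X × Y → ℝ) (h h' : X → A)
    (D : Set X) [DecidablePred (· ∈ D)] (z : X × Y) :
    outcomeCosts L c (D.piecewise h' h) z
      = if z.1 ∈ D then outcomeCosts L c h' z else outcomeCosts L c h z := by
  by_cases hz : z.1 ∈ D <;> simp [outcomeCosts, hz]

end Losses

theorem selection_single {ι : Type*} [DecidableEq ι] {sel : (ι → ℝ) → ι}
    (hsel : ∀ (s : ι → ℝ) (j : ι), s j ≤ s (sel s)) (i : ι) :
    sel (Pi.single i (1 : ℝ)) = i := by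
  by_contra h
  have := hsel (Pi.single i 1) i
  rw [Pi.single_eq_same, Pi.single_eq_of_ne h] at this
  linarith

section ExcessErrorBound

variable {X Y A S : Type*} [MeasurableSpace X] [MeasurableSpace Y] {n : ℕ} {L : A → Y → ℝ}
  {c : Fin n → X × Y → ℝ} {M : ℝ} {sel : S → Fin (n + 1)} {ℓ : S → Fin (n + 1) → ℝ}

theorem genErr_singleStageLoss_const_ne_top (hn : 1 ≤ n) (hL0 : ∀ a y, 0 ≤ L a y)
    (hc0 : ∀ j z, 0 ≤ c j z) (hM : ∀ a x y, L a y + ∑ j, c j (x, y) ≤ M)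
    (hℓ0 : ∀ s k, 0 ≤ ℓ s k) (hℓ1 : ∀ s k, k ≠ sel s → 1 ≤ ℓ s k) (μ : Measure (X × Y))
    [IsFiniteMeasure μ] (h : X → A) (s : S) :
    genErr μ (singleStageLoss L c ℓ h fun _ => s) ≠ ∞ := by
  refine ne_top_of_le_ne_top (b := (∑ k, ENNReal.ofReal (ℓ s k)) * ENNReal.ofReal M * μ .univ)
    ?_ ?_
  · exact ENNReal.mul_ne_top (ENNReal.mul_ne_top (ENNReal.sum_ne_top.2 fun _ _ => ofReal_ne_top)
      ofReal_ne_top) (measure_ne_top μ _)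
  rw [← lintegral_const]
  refine lintegral_mono fun z => ?_
  rw [ofReal_singleStageLoss hn hL0 hc0 hℓ0 hℓ1]
  grw [singleStageCharge_dotProduct_le, sum_ofReal_outcomeCosts_le hL0 hc0 hM]

variable [MeasurableSpace A] [MeasurableSpace S] {α β : ℝ}

theorem measurable_ofReal_outcomeCosts (hL : Measurable fun p : A × Y => L p.1 p.2)
    (hc : ∀ j, Measurable (c j)) {h : X → A} (hh : Measurable h) :
    Measurable fun z i => ENNReal.ofReal (outcomeCosts L c h z i) :=
  measurable_pi_iff.2 fun i => Measurable.ennreal_ofReal <| by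
    cases i using Fin.cases
    exacts [hL.comp ((hh.comp measurable_fst).prodMk measurable_snd), hc _]

theorem genErr_deferralLoss_le (hL : Measurable fun p : A × Y => L p.1 p.2)
    (hL0 : ∀ a y, 0 ≤ L a y) (hc : ∀ j, Measurable (c j)) (hc0 : ∀ j z, 0 ≤ c j z)
    (hM : ∀ a x y, L a y + ∑ j, c j (x, y) ≤ M) (hsel : Measurable sel)
    (hdefer : ∃ s, sel s ≠ 0) (hℓ : Measurable ℓ) (hℓ0 : ∀ s k, 0 ≤ ℓ s k)
    (hℓ1 : ∀ s k, k ≠ sel s → 1 ≤ ℓ s k) (hα0 : 0 ≤ α) (hα1 : α ≤ 1) {b : ℝ≥0∞}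
    (hcons : HasExcessErrorBound X sel (fun s k => ENNReal.ofReal (ℓ s k)) α b)
    (μ : Measure (X × Y)) [IsProbabilityMeasure μ] {h h' : X → A} (hh : Measurable h)
    (hh' : Measurable h') {r r' : X → S} (hr : Measurable r) (hr' : Measurable r') :
    genErr μ (deferralLoss L c sel h r) ≤ genErr μ (deferralLoss L c sel h' r')
      + b * ((n * ENNReal.ofReal M) ^ (1 - α) * (genErr μ (singleStageLoss L c ℓ h r)
          - ⨅ (h' : X → A) (_ : Measurable h') (r' : X → S) (_ : Measurable r'),
              genErr μ (singleStageLoss L c ℓ h' r')) ^ α) := by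
  obtain ⟨s, hs⟩ := hdefer
  have : Nontrivial (Fin (n + 1)) := ⟨_, _, hs⟩
  have hn : 1 ≤ n := by
    have := Fin.nontrivial_iff_two_le.1 this
    lia
  set f : (X → A) → X × Y → Fin (n + 1) → ℝ≥0∞ :=
    fun g z i => ENNReal.ofReal (outcomeCosts L c g z i)
  have hf : ∀ {g : X → A}, Measurable g → Measurable (f g) :=
    measurable_ofReal_outcomeCosts hL hc
  have hsurrogate : ∀ (g : X → A) (ρ : X → S), genErr μ (singleStageLoss L c ℓ g ρ)
      = ∫⁻ z, singleStageCharge 0 (fun k => ENNReal.ofReal (ℓ (ρ z.1) k)) ⬝ᵥ f g z ∂μ :=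
    fun g ρ => lintegral_congr fun z => ofReal_singleStageLoss hn hL0 hc0 hℓ0 hℓ1 g ρ z
  have htotal : (Fintype.card (Fin (n + 1)) - 1 : ℕ) * ∫⁻ z, ∑ i, f h z i ∂μ
      ≤ n * ENNReal.ofReal M := by
    rw [Fintype.card_fin, Nat.add_sub_cancel]
    gcongr
    simpa using lintegral_mono (μ := μ) (sum_ofReal_outcomeCosts_le hL0 hc0 hM h)
  set e := ⨅ (h' : X → A) (_ : Measurable h') (r' : X → S) (_ : Measurable r'),
    genErr μ (singleStageLoss L c ℓ h' r')
  have he_le : ∀ g : X → A, Measurable g → ∀ ρ : X → S, Measurable ρ →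
      e ≤ genErr μ (singleStageLoss L c ℓ g ρ) :=
    fun g hg ρ hρ => iInf₂_le_of_le g hg (iInf₂_le ρ hρ)
  have he : e ≠ ∞ := ne_top_of_le_ne_top
    (genErr_singleStageLoss_const_ne_top hn hL0 hc0 hM hℓ0 hℓ1 μ h s)
    (he_le h hh _ measurable_const)
  rw [hsurrogate]
  refine hcons.lintegral_joint_deferral_le hα0 hα1 hsel (by fun_prop)
    (fun s k hk => ENNReal.one_le_ofReal.2 (hℓ1 s k hk)) ⟨s, hs⟩ (hf hh) (hf hh')
    (Fin.cases (by simp) fun j _ z => rfl) htotal (by finiteness) he (fun D _ hD ρ hρ => ?_) hr hr'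
  refine (he_le (D.piecewise h' h) (hh'.piecewise hD hh) ρ hρ).trans_eq ?_
  rw [hsurrogate]
  refine lintegral_congr fun z => congrArg _ ?_
  simp only [f, outcomeCosts_piecewise]
  split_ifs <;> rfl

theorem single_stage_excess_error_bound_general (hL : Measurable fun p : A × Y => L p.1 p.2)
    (hL0 : ∀ a y, 0 ≤ L a y) (hc : ∀ j, Measurable (c j)) (hc0 : ∀ j z, 0 ≤ c j z)
    (hM : ∀ a x y, L a y + ∑ j, c j (x, y) ≤ M) (hsel : Measurable sel)
    (hdefer : ∃ s, sel s ≠ 0) (hℓ : Measurable ℓ) (hℓ0 : ∀ s k, 0 ≤ ℓ s k)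
    (hℓ1 : ∀ s k, k ≠ sel s → 1 ≤ ℓ s k) (hα0 : 0 ≤ α) (hα1 : α ≤ 1)
    (hcons : HasExcessErrorBound X sel (fun s k => ENNReal.ofReal (ℓ s k)) α (ENNReal.ofReal β))
    (μ : Measure (X × Y)) [IsProbabilityMeasure μ] {h : X → A} (hh : Measurable h) {r : X → S}
    (hr : Measurable r) :
    genErr μ (deferralLoss L c sel h r)
        - (⨅ (h' : X → A) (_ : Measurable h') (r' : X → S) (_ : Measurable r'),
            genErr μ (deferralLoss L c sel h' r'))
      ≤ ENNReal.ofReal ((n * M) ^ (1 - α) * β) *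
          (genErr μ (singleStageLoss L c ℓ h r)
            - ⨅ (h' : X → A) (_ : Measurable h') (r' : X → S) (_ : Measurable r'),
                genErr μ (singleStageLoss L c ℓ h' r')) ^ α := by
  have hM0 : 0 ≤ M := by
    obtain ⟨x, y⟩ := nonempty_of_isProbabilityMeasure μ
    exact (add_nonneg (hL0 _ _) (Finset.sum_nonneg fun j _ => hc0 j _)).trans (hM (h x) x y)
  have hconst : ENNReal.ofReal ((n * M) ^ (1 - α) * β)
      = ENNReal.ofReal β * (n * ENNReal.ofReal M) ^ (1 - α) := by
    rw [ENNReal.ofReal_mul (by positivity), mul_comm,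
      ← ENNReal.ofReal_rpow_of_nonneg (by positivity) (sub_nonneg.2 hα1),
      ENNReal.ofReal_mul (Nat.cast_nonneg _), ENNReal.ofReal_natCast]
  rw [tsub_le_iff_left, hconst, mul_assoc]
  simp only [ENNReal.iInf_add]
  exact le_iInf₂ fun h' hh' => le_iInf₂ fun r' hr' => genErr_deferralLoss_le hL hL0 hc hc0 hM hsel
    hdefer hℓ hℓ0 hℓ1 hα0 hα1 hcons μ hh hh' hr hr'

end ExcessErrorBound

/-- Corollary 3.2: excess error bound for the single-stage surrogate
over all measurable functions. -/
theorem single_stage_excess_error_bound {X : Type*} [MeasurableSpace X]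
    (nE : ℕ) (hnE : 1 ≤ nE)
    (lbar : ℝ) (hlbar : 0 < lbar)
    (C : Fin nE → ℝ) (hC : ∀ j, 0 < C j)
    (L : ℝ → ℝ → ℝ) (hLmeas : Measurable fun p : ℝ × ℝ => L p.1 p.2)
    (hL : ∀ y' y, L y' y ∈ Set.Icc 0 lbar)
    (c : Fin nE → X × ℝ → ℝ) (hcmeas : ∀ j, Measurable (c j))
    (hc : ∀ j z, c j z ∈ Set.Ioc 0 (C j))
    (sel : (Fin (nE + 1) → ℝ) → Fin (nE + 1)) (hselmeas : Measurable sel)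
    (hsel : ∀ (s : Fin (nE + 1) → ℝ) (j : Fin (nE + 1)), s j ≤ s (sel s))
    (ℓ : (Fin (nE + 1) → ℝ) → Fin (nE + 1) → ℝ)
    (hℓmeas : Measurable fun p : (Fin (nE + 1) → ℝ) × Fin (nE + 1) => ℓ p.1 p.2)
    (hℓ0 : ∀ s j, 0 ≤ ℓ s j)
    (hℓ1 : ∀ s j, j ≠ sel s → 1 ≤ ℓ s j)
    (α β : ℝ) (hα : α ∈ Set.Ioc (0 : ℝ) 1) (hβ : 0 < β)
    (hcons : ∀ ν : Measure (X × Fin (nE + 1)), IsProbabilityMeasure ν →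
      ∀ r : X → Fin (nE + 1) → ℝ, Measurable r →
        E01 nE sel ν r
            - (⨅ (r' : X → Fin (nE + 1) → ℝ) (_ : Measurable r'), E01 nE sel ν r')
          ≤ ENNReal.ofReal β *
            (Eell nE ℓ ν r
              - ⨅ (r' : X → Fin (nE + 1) → ℝ) (_ : Measurable r'), Eell nE ℓ ν r') ^ α)
    (μ : Measure (X × ℝ)) [IsProbabilityMeasure μ]
    (h : X → ℝ) (hh : Measurable h)
    (r : X → Fin (nE + 1) → ℝ) (hr : Measurable r) :
    genErr μ (defLoss nE L c sel h r)
        - (⨅ (h' : X → ℝ) (_ : Measurable h') (r' : X → Fin (nE + 1) → ℝ)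
            (_ : Measurable r'), genErr μ (defLoss nE L c sel h' r'))
      ≤ max
          (genErr μ (surLoss nE L c ℓ h r)
            - ⨅ (h' : X → ℝ) (_ : Measurable h') (r' : X → Fin (nE + 1) → ℝ)
                (_ : Measurable r'), genErr μ (surLoss nE L c ℓ h' r'))
          (ENNReal.ofReal (((nE : ℝ) * (lbar + ∑ j, C j)) ^ (1 - α) * β) *
            (genErr μ (surLoss nE L c ℓ h r)
              - ⨅ (h' : X → ℝ) (_ : Measurable h') (r' : X → Fin (nE + 1) → ℝ)
                  (_ : Measurable r'), genErr μ (surLoss nE L c ℓ h' r')) ^ α) := by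
  have hdefer : ∃ s, sel s ≠ 0 :=
    ⟨_, (selection_single hsel (Fin.last nE)).trans_ne (Fin.last_eq_zero_iff.not.2 (by lia))⟩
  simp only [defLoss_eq_deferralLoss, surLoss_eq_singleStageLoss]
  exact le_max_of_le_right <| single_stage_excess_error_bound_general hLmeas
    (fun a y => (hL a y).1) hcmeas (fun j z => (hc j z).1.le)
    (fun a x y => add_le_add (hL a y).2 (Finset.sum_le_sum fun j _ => (hc j _).2)) hselmeas
    hdefer (measurable_pi_iff.2 fun k => hℓmeas.comp measurable_prodMk_right) hℓ0 hℓ1 hα.1.le hα.2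
    hcons μ hh hr
end
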